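/- arXiv:2504.17284 — 4 statements merged into one kernel-verified Lean document; each statement's English description precedes it below -/
import Mathlib

section
/- For Re(x) > 0, the series ∑_{n≥1} (ψ(nx) - log(nx) + 1/(2nx)) equals the negative of the integral ∫₀^∞ (1/(e^t - 1) - 1/t + 1/2) · 1/(e^{xt} - 1) dt, where ψ is the digamma function. -/
open MeasureTheory Set

noncomputable def digammaC (x : ℂ) : ℂ := deriv Complex.Gamma x / Complex.Gamma x

/-- `𝓢₁(x) = ∑ (ψ(nx) - log(nx) + 1/(2nx))`. -/
noncomputable def S1 (x : ℂ) : ℂ :=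
  ∑' n : ℕ, (digammaC ((n + 1) * x) - Complex.log ((n + 1) * x) + 1 / (2 * (n + 1) * x))

/-- The Ramanujan period function `𝓕₁`. -/
noncomputable def F1 (x : ℂ) : ℂ :=
  S1 x - (1 / 2) * ((Real.eulerMascheroniConstant : ℂ) - Complex.log (2 * Real.pi / x))

open MeasureTheory Set Filter Topology

noncomputable def gR (t : ℝ) : ℝ := 1 / (Real.exp t - 1) - 1 / t + 1 / 2

lemma gR_nonneg {t : ℝ} (ht : 0 < t) : 0 ≤ gR t := by
  have hmono : MonotoneOn (fun t : ℝ => (t - 2) * Real.exp t + t + 2) (Set.Ici 0) := by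
    have hd : ∀ s : ℝ, HasDerivAt (fun t : ℝ => (t - 2) * Real.exp t + t + 2)
        ((s - 1) * Real.exp s + 1) s := by
      intro s
      have h := ((((hasDerivAt_id s).sub_const 2).mul (Real.hasDerivAt_exp s)).add
        (hasDerivAt_id s)).add_const 2
      refine h.congr_deriv ?_
      simp
      ring
    refine monotoneOn_of_deriv_nonneg (convex_Ici 0) (by fun_prop) ?_ ?_
    · intro s _
      exact (hd s).differentiableAt.differentiableWithinAt
    · intro s _
      rw [(hd s).deriv]
      have h1 := Real.add_one_le_exp (-s)
      have h2 := Real.exp_pos s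
      have h3 : Real.exp (-s) * Real.exp s = 1 := by rw [← Real.exp_add]; simp
      nlinarith
  have h0 := hmono (Set.mem_Ici.2 le_rfl) (Set.mem_Ici.2 ht.le) ht.le
  simp at h0
  have he : 0 < Real.exp t - 1 := by have := Real.add_one_lt_exp ht.ne'; linarith
  have : gR t = ((t - 2) * Real.exp t + t + 2) / (2 * t * (Real.exp t - 1)) := by
    unfold gR
    field_simp
    ring
  rw [this]
  positivity

lemma gR_le {t : ℝ} (ht : 0 < t) : gR t ≤ t := by
  have h1 : t + t ^ 2 / 2 ≤ Real.exp t - 1 := by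
    have := Real.quadratic_le_exp_of_nonneg ht.le
    linarith
  have h2 : 1 / (Real.exp t - 1) ≤ 1 / (t + t ^ 2 / 2) :=
    one_div_le_one_div_of_le (by positivity) h1
  have h3 : 1 / (t + t ^ 2 / 2) - 1 / t + 1 / 2 = t / (2 * (2 + t)) := by
    field_simp
    ring
  have h4 : t / (2 * (2 + t)) ≤ t := div_le_self ht.le (by linarith)
  unfold gR
  linarith

lemma gR_meas : Measurable gR := by
  unfold gR
  fun_prop

lemma int_t_exp {s : ℝ} (hs : 0 < s) :
    IntegrableOn (fun t : ℝ => t * Real.exp (-s * t)) (Set.Ioi 0) := by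
  have := integrableOn_rpow_mul_exp_neg_mul_rpow (p := 1) (s := 1) (b := s) (by norm_num)
    one_pos hs
  simpa using this

lemma val_t_exp {s : ℝ} (hs : 0 < s) :
    ∫ t in Set.Ioi (0:ℝ), t * Real.exp (-s * t) = 1 / s ^ 2 := by
  have := Real.integral_rpow_mul_exp_neg_mul_Ioi (a := 2) (r := s) (by norm_num) hs
  have h2 : Real.Gamma 2 = 1 := by simp
  rw [h2] at this
  norm_num at this
  simpa using this

lemma int_gR {s : ℝ} (hs : 0 < s) :
    IntegrableOn (fun t : ℝ => gR t * Real.exp (-s * t)) (Set.Ioi 0) := by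
  refine Integrable.mono' (int_t_exp hs) ?_ ?_
  · exact (gR_meas.mul (by fun_prop)).aestronglyMeasurable
  · filter_upwards [ae_restrict_mem measurableSet_Ioi] with t ht
    rw [norm_mul, Real.norm_of_nonneg (gR_nonneg ht), Real.norm_of_nonneg (Real.exp_pos _).le]
    exact mul_le_mul_of_nonneg_right (gR_le ht) (Real.exp_pos _).le

noncomputable def JR (s : ℝ) : ℝ := ∫ t in Set.Ioi (0:ℝ), gR t * Real.exp (-s * t)

lemma JR_nonneg {s : ℝ} : 0 ≤ JR s :=
  setIntegral_nonneg measurableSet_Ioi fun _ ht => mul_nonneg (gR_nonneg ht) (Real.exp_pos _).le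

lemma JR_le {s : ℝ} (hs : 0 < s) : JR s ≤ 1 / s ^ 2 := by
  rw [← val_t_exp hs]
  exact setIntegral_mono_on (int_gR hs) (int_t_exp hs) measurableSet_Ioi fun t ht =>
    mul_le_mul_of_nonneg_right (gR_le ht) (Real.exp_pos _).le

lemma JR_rec {s : ℝ} (hs : 0 < s) :
    JR s - JR (s + 1) = (1 / s + 1 / (s + 1)) / 2 - Real.log ((s + 1) / s) := by
  have hs1 : 0 < s + 1 := by linarith
  have e1 := integrableOn_exp_mul_Ioi (a := -s) (by linarith) 0
  have e2 := integrableOn_exp_mul_Ioi (a := -(s + 1)) (by linarith) 0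
  have v1 := integral_exp_mul_Ioi (a := -s) (by linarith) 0
  have v2 := integral_exp_mul_Ioi (a := -(s + 1)) (by linarith) 0
  have key : ∀ t ∈ Set.Ioi (0:ℝ),
      (1 / 2 : ℝ) * (Real.exp (-s * t) + Real.exp (-(s + 1) * t))
        - (gR t * Real.exp (-s * t) - gR t * Real.exp (-(s + 1) * t))
      = t⁻¹ • (Real.exp (-(s * t)) - Real.exp (-((s + 1) * t))) := by
    intro t ht
    have ht : 0 < t := ht
    have he : 0 < Real.exp t - 1 := by have := Real.add_one_lt_exp ht.ne'; linarith
    have hE : Real.exp (-s * t) = Real.exp t * Real.exp (-(s + 1) * t) := by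
      rw [← Real.exp_add]; ring_nf
    rw [← neg_mul, ← neg_mul, hE]
    unfold gR
    simp only [smul_eq_mul]
    field_simp
    ring
  have hintL : IntegrableOn (fun t : ℝ =>
      (1 / 2 : ℝ) * (Real.exp (-s * t) + Real.exp (-(s + 1) * t))
        - (gR t * Real.exp (-s * t) - gR t * Real.exp (-(s + 1) * t))) (Set.Ioi 0) :=
    ((e1.add e2).const_mul (1 / 2)).sub ((int_gR hs).sub (int_gR hs1))
  have hint := hintL.congr_fun key measurableSet_Ioi
  have hc : Continuous (fun u : ℝ => Real.exp (-u)) := by fun_prop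
  have hloc : LocallyIntegrableOn (fun u : ℝ => Real.exp (-u)) (Ioi 0) :=
    hc.locallyIntegrable.locallyIntegrableOn _
  have i1 : ∫ t in Ioi (0:ℝ), ((1 / 2 : ℝ) * (Real.exp (-s * t) + Real.exp (-(s + 1) * t))
        - (gR t * Real.exp (-s * t) - gR t * Real.exp (-(s + 1) * t))) =
      (∫ t in Ioi (0:ℝ), (1 / 2 : ℝ) * (Real.exp (-s * t) + Real.exp (-(s + 1) * t)))
      - ∫ t in Ioi (0:ℝ), (gR t * Real.exp (-s * t) - gR t * Real.exp (-(s + 1) * t)) :=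
    integral_sub ((e1.add e2).const_mul (1 / 2)) ((int_gR hs).sub (int_gR hs1))
  have hF := Frullani.integral_Ioi_eq (f := fun u : ℝ => Real.exp (-u)) (a := s) (b := s + 1)
    (L := 1) (R := 0) hloc hs hs1 (by
      have : Continuous (fun u : ℝ => Real.exp (-u)) := by fun_prop
      have := (this.tendsto 0).mono_left (nhdsWithin_le_nhds (s := Set.Ioi 0))
      simpa using this) Real.tendsto_exp_neg_atTop_nhds_zero hint
  rw [← setIntegral_congr_fun measurableSet_Ioi key, i1,
    integral_sub (int_gR hs) (int_gR hs1), integral_const_mul, integral_add e1 e2, v1, v2] at hF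
  simp at hF
  unfold JR
  simp only [neg_add_rev, neg_mul] at hF ⊢
  simp only [one_div, neg_add_rev] at hF ⊢
  have h5 : (-1 + -s)⁻¹ = - (s + 1)⁻¹ := by rw [← inv_neg]; ring_nf
  simp only [neg_div, one_div, h5, div_neg, neg_neg] at hF
  linarith

noncomputable def PR (s : ℝ) : ℝ := deriv (Real.log ∘ Real.Gamma) s

lemma lG_rec (x : ℝ) (hx : 0 < x) :
    (Real.log ∘ Real.Gamma) (x + 1) = (Real.log ∘ Real.Gamma) x + Real.log x := by
  simp only [Function.comp_apply, Real.Gamma_add_one hx.ne',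
    Real.log_mul hx.ne' (Real.Gamma_pos_of_pos hx).ne', add_comm]

lemma lG_diff {x : ℝ} (hx : 0 < x) : DifferentiableAt ℝ (Real.log ∘ Real.Gamma) x := by
  refine ((Real.differentiableAt_Gamma ?_).log (Real.Gamma_ne_zero ?_)) <;>
  exact fun m ↦ ne_of_gt (by have : (0:ℝ) ≤ m := m.cast_nonneg
                             linarith)

lemma PR_rec (x : ℝ) (hx : 0 < x) : PR (x + 1) = PR x + 1 / x := by
  unfold PR
  rw [← deriv_comp_add_const, one_div, ← Real.deriv_log,
    ← deriv_add (lG_diff hx) (Real.differentiableAt_log hx.ne')]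
  apply EventuallyEq.deriv_eq
  filter_upwards [eventually_gt_nhds hx] using lG_rec

lemma PR_ub (x : ℝ) (hx : 0 < x) : PR x ≤ Real.log x := by
  refine (Real.convexOn_log_Gamma.deriv_le_slope (y := x + 1) (Set.mem_Ioi.2 hx)
    (Set.mem_Ioi.2 (by linarith)) (by linarith) (lG_diff hx)).trans (le_of_eq ?_)
  rw [slope_def_field, lG_rec x hx]
  simp

lemma PR_lb (x : ℝ) (hx : 0 < x) : Real.log x ≤ PR x + 1 / x := by
  rw [← PR_rec x hx]
  refine (le_of_eq ?_).trans (Real.convexOn_log_Gamma.slope_le_deriv (x := x) (Set.mem_Ioi.2 hx)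
    (Set.mem_Ioi.2 (by linarith)) (by linarith) (lG_diff (by linarith)))
  rw [slope_def_field, lG_rec x hx]
  simp

lemma binet_real (x : ℝ) (hx : 0 < x) : PR x - Real.log x + 1 / (2 * x) = - JR x := by
  let H : ℝ → ℝ := fun x => PR x - Real.log x + 1 / (2 * x) + JR x
  have hrec : ∀ y, 0 < y → H (y + 1) = H y := by
    intro y hy
    have h1 := PR_rec y hy
    have h2 := JR_rec hy
    rw [Real.log_div (by positivity) hy.ne'] at h2
    have h3 : 1 / (2 * y) = (1 / y) / 2 := by field_simp
    have h4 : 1 / (2 * (y + 1)) = (1 / (y + 1)) / 2 := by field_simp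
    simp only [H, h3, h4]
    linarith
  have hn : ∀ n : ℕ, H (x + n) = H x := by
    intro n
    induction n with
    | zero => simp
    | succ k ih => rw [← ih, ← hrec (x + k) (by positivity)]; push_cast; ring_nf
  have hb : ∀ y, 0 < y → |H y| ≤ 2 * (1 / y) + 1 / y * (1 / y) := by
    intro y hy
    have h1 := PR_ub y hy
    have h2 := PR_lb y hy
    have h3 : 1 / (2 * y) = (1 / y) / 2 := by field_simp
    have h4 := JR_nonneg (s := y)
    have h5 := JR_le hy
    have h6 : 1 / y ^ 2 = 1 / y * (1 / y) := by field_simp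
    have h7 : 0 < 1 / y := by positivity
    rw [h6] at h5
    have h8 : 0 < 1 / y * (1 / y) := by positivity
    simp only [H, h3]
    rw [abs_le]
    constructor <;> linarith
  have hl : Tendsto (fun n : ℕ => 1 / (x + n)) atTop (𝓝 0) := by
    simp only [one_div]
    exact tendsto_inv_atTop_zero.comp
      (tendsto_atTop_add_const_left _ _ tendsto_natCast_atTop_atTop)
  have h0 : Tendsto (fun _ : ℕ => H x) atTop (𝓝 0) := by
    refine squeeze_zero_norm (fun n => ?_) (a := fun n : ℕ => 2 * (1 / (x + n)) + 1 / (x + n) * (1 / (x + n))) (by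
      simpa using (hl.const_mul 2).add (hl.mul hl))
    rw [← hn n]
    exact hb _ (by positivity)
  have := tendsto_nhds_unique tendsto_const_nhds h0
  simp only [H] at this
  linarith

lemma digammaC_ofReal (x : ℝ) (hx : 0 < x) : digammaC (x : ℂ) = (PR x : ℂ) := by
  have hR : DifferentiableAt ℝ Real.Gamma x := Real.differentiableAt_Gamma
    fun m => ne_of_gt (by have : (0:ℝ) ≤ m := m.cast_nonneg
                          linarith)
  have hC : DifferentiableAt ℂ Complex.Gamma (x : ℂ) := Complex.differentiableAt_Gamma _ (by
    intro m h
    have h2 := congrArg Complex.re h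
    simp at h2
    have : (0:ℝ) ≤ m := m.cast_nonneg
    linarith)
  have h1 := hC.hasDerivAt.comp_ofReal
  have h2 := hR.hasDerivAt.ofReal_comp
  simp only [Complex.Gamma_ofReal] at h1
  have h3 := h1.unique h2
  have h4 : PR x = deriv Real.Gamma x / Real.Gamma x := by
    unfold PR
    exact (hR.hasDerivAt.log (Real.Gamma_pos_of_pos hx).ne').deriv
  rw [digammaC, h3, h4, Complex.Gamma_ofReal]
  push_cast
  rfl

lemma int_tt_exp {s : ℝ} (hs : 0 < s) :
    IntegrableOn (fun t : ℝ => t * t * Real.exp (-s * t)) (Set.Ioi 0) := by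
  have := integrableOn_rpow_mul_exp_neg_mul_rpow (p := 1) (s := 2) (b := s) (by norm_num)
    one_pos hs
  simpa [pow_two] using this

lemma norm_cexp_mul (z : ℂ) (t : ℝ) : ‖Complex.exp (-z * t)‖ = Real.exp (-z.re * t) := by
  rw [Complex.norm_exp]
  simp

lemma norm_gRC {z : ℂ} {t : ℝ} (ht : 0 < t) :
    ‖(gR t : ℂ) * Complex.exp (-z * t)‖ = gR t * Real.exp (-z.re * t) := by
  rw [norm_mul, norm_cexp_mul, Complex.norm_real, Real.norm_of_nonneg (gR_nonneg ht)]

lemma meas_gRC (z : ℂ) : Measurable fun t : ℝ => (gR t : ℂ) * Complex.exp (-z * t) := by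
  have := gR_meas
  fun_prop

lemma int_gRC {z : ℂ} (hz : 0 < z.re) :
    IntegrableOn (fun t : ℝ => (gR t : ℂ) * Complex.exp (-z * t)) (Ioi 0) := by
  refine Integrable.mono' (int_gR hz) (meas_gRC z).aestronglyMeasurable ?_
  filter_upwards [ae_restrict_mem measurableSet_Ioi] with t ht
  exact (norm_gRC ht).le

noncomputable def JC (z : ℂ) : ℂ := ∫ t in Ioi (0:ℝ), (gR t : ℂ) * Complex.exp (-z * t)

lemma JC_ofReal (x : ℝ) : JC x = (JR x : ℂ) := by
  unfold JC JR
  rw [← integral_complex_ofReal]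
  congr 1
  ext t
  push_cast
  rfl

lemma JC_diff {z : ℂ} (hz : 0 < z.re) : DifferentiableAt ℂ JC z := by
  have hs : {w : ℂ | z.re / 2 < w.re} ∈ 𝓝 z :=
    (isOpen_lt continuous_const Complex.continuous_re).mem_nhds (by
      simp only [Set.mem_setOf_eq]; linarith)
  have := hasDerivAt_integral_of_dominated_loc_of_deriv_le (μ := volume.restrict (Ioi (0:ℝ)))
    (F := fun (z : ℂ) (t : ℝ) => (gR t : ℂ) * Complex.exp (-z * t))
    (F' := fun (z : ℂ) (t : ℝ) => (gR t : ℂ) * (Complex.exp (-z * t) * (-t)))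
    (bound := fun t => t * t * Real.exp (-(z.re / 2) * t)) hs
    (Eventually.of_forall fun w => (meas_gRC w).aestronglyMeasurable) (int_gRC hz)
    (by
      have := gR_meas
      exact Measurable.aestronglyMeasurable (by fun_prop))
    (by
      filter_upwards [ae_restrict_mem measurableSet_Ioi] with t ht w hw
      have ht : 0 < t := ht
      have hw : z.re / 2 < w.re := hw
      rw [← mul_assoc, norm_mul, norm_gRC ht, norm_neg, Complex.norm_real,
        Real.norm_of_nonneg ht.le]
      have h1 : Real.exp (-w.re * t) ≤ Real.exp (-(z.re / 2) * t) :=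
        Real.exp_le_exp.2 (by nlinarith)
      have h2 : gR t * Real.exp (-w.re * t) ≤ t * Real.exp (-(z.re / 2) * t) :=
        mul_le_mul (gR_le ht) h1 (Real.exp_pos _).le ht.le
      calc _ ≤ t * Real.exp (-(z.re / 2) * t) * t := mul_le_mul_of_nonneg_right h2 ht.le
        _ = _ := by ring)
    (int_tt_exp (by linarith))
    (by
      refine Eventually.of_forall fun t w _ => ?_
      have h : HasDerivAt (fun w : ℂ => -w * (t : ℂ)) (-(t : ℂ)) w := by
        simpa using ((hasDerivAt_id w).neg.mul_const (t : ℂ))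
      exact h.cexp.const_mul _)
  exact this.2.differentiableAt

lemma binet_complex {z : ℂ} (hz : 0 < z.re) :
    digammaC z - Complex.log z + 1 / (2 * z) = - JC z := by
  have hopen : IsOpen {w : ℂ | 0 < w.re} := isOpen_lt continuous_const Complex.continuous_re
  have hG : ∀ w : ℂ, 0 < w.re → ∀ m : ℕ, w ≠ -m := by
    intro w hw m h
    have h2 := congrArg Complex.re h
    simp at h2
    have : (0:ℝ) ≤ m := m.cast_nonneg
    linarith
  have hGd : DifferentiableOn ℂ Complex.Gamma {w : ℂ | 0 < w.re} := fun w hw =>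
    (Complex.differentiableAt_Gamma w (hG w hw)).differentiableWithinAt
  have hf : DifferentiableOn ℂ (fun z : ℂ => digammaC z - Complex.log z + 1 / (2 * z))
      {w : ℂ | 0 < w.re} := by
    have h1 : DifferentiableOn ℂ digammaC {w : ℂ | 0 < w.re} :=
      (hGd.deriv hopen).div hGd fun w hw => Complex.Gamma_ne_zero (hG w hw)
    refine (h1.sub ?_).add ?_
    · exact fun w hw => (Complex.differentiableAt_log (Or.inl hw)).differentiableWithinAt
    · refine DifferentiableOn.div (by fun_prop) (by fun_prop) fun w hw h => ?_
      have : w = 0 := by simpa using h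
      simp [this] at hw
  have hg : DifferentiableOn ℂ (fun z : ℂ => - JC z) {w : ℂ | 0 < w.re} := fun w hw =>
    (JC_diff hw).neg.differentiableWithinAt
  have hpre : IsPreconnected {w : ℂ | 0 < w.re} := (convex_halfSpace_re_gt 0).isPreconnected
  refine (hf.analyticOnNhd hopen).eqOn_of_preconnected_of_frequently_eq (hg.analyticOnNhd hopen)
    hpre (z₀ := ((1:ℝ) : ℂ)) (by simp) ?_ hz
  have ht : Tendsto (fun r : ℝ => (r : ℂ)) (𝓝[≠] 1) (𝓝[≠] ((1:ℝ):ℂ)) := by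
    refine tendsto_nhdsWithin_iff.2
      ⟨(Complex.continuous_ofReal.tendsto 1).mono_left nhdsWithin_le_nhds, ?_⟩
    filter_upwards [self_mem_nhdsWithin] with r hr
    simpa using hr
  refine ht.frequently (Eventually.frequently ?_)
  filter_upwards [nhdsWithin_le_nhds (eventually_gt_nhds (zero_lt_one' ℝ))] with r hr
  rw [digammaC_ofReal r hr, JC_ofReal, ← Complex.ofReal_log hr.le]
  exact_mod_cast binet_real r hr

theorem ramanujan_integral_representation (x : ℂ) (hx : 0 < x.re) :
    S1 x = -∫ t in Set.Ioi (0 : ℝ),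
      (1 / (Complex.exp t - 1) - 1 / (t : ℂ) + 1 / 2) * (1 / (Complex.exp (x * t) - 1)) := by
  have hre : ∀ n : ℕ, (((n : ℂ) + 1) * x).re = (n + 1) * x.re := by
    intro n
    have : ((n : ℂ) + 1) = (((n : ℝ) + 1 : ℝ) : ℂ) := by push_cast; rfl
    rw [this, Complex.re_ofReal_mul]
  have hpos : ∀ n : ℕ, 0 < (((n : ℂ) + 1) * x).re := by
    intro n
    rw [hre]
    positivity
  have hsum : Summable fun n : ℕ => ∫ t in Ioi (0:ℝ),
      ‖(gR t : ℂ) * Complex.exp (-(((n : ℂ) + 1) * x) * t)‖ := by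
    have h1 : Summable fun n : ℕ => (1 / x.re ^ 2) * (1 / ((n : ℝ) + 1) ^ 2) := by
      refine Summable.mul_left _ ?_
      have := (summable_nat_add_iff 1).2 (Real.summable_one_div_nat_pow.2 one_lt_two)
      simpa using this
    refine Summable.of_nonneg_of_le (fun n => integral_nonneg fun t => norm_nonneg _)
      (fun n => ?_) h1
    have h2 : ∫ t in Ioi (0:ℝ), ‖(gR t : ℂ) * Complex.exp (-(((n : ℂ) + 1) * x) * t)‖
        = JR (((n : ℂ) + 1) * x).re :=
      setIntegral_congr_fun measurableSet_Ioi fun t ht => norm_gRC ht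
    rw [h2]
    refine (JR_le (hpos n)).trans (le_of_eq ?_)
    rw [hre]
    field_simp
  have key := (hasSum_integral_of_summable_integral_norm (fun n => int_gRC (hpos n)) hsum).tsum_eq
  have hS : S1 x = - ∑' n : ℕ, JC (((n : ℂ) + 1) * x) := by
    rw [S1, ← tsum_neg]
    congr 1
    ext n
    rw [← binet_complex (hpos n), mul_assoc]
  rw [hS]
  unfold JC
  rw [key]
  congr 1
  refine setIntegral_congr_fun measurableSet_Ioi fun t ht => ?_
  have ht : 0 < t := ht
  rw [tsum_mul_left]
  congr 1
  · unfold gR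
    push_cast
    rfl
  · have hq : ‖Complex.exp (-x * t)‖ < 1 := by
      rw [norm_cexp_mul, Real.exp_lt_one_iff]
      nlinarith
    have h1 : ∀ n : ℕ, Complex.exp (-(((n : ℂ) + 1) * x) * t)
        = Complex.exp (-x * t) * Complex.exp (-x * t) ^ n := by
      intro n
      rw [← Complex.exp_nat_mul, ← Complex.exp_add]
      ring_nf
    simp_rw [h1]
    rw [tsum_mul_left, tsum_geometric_of_norm_lt_one hq]
    have h2 : Complex.exp (x * t) = (Complex.exp (-x * t))⁻¹ := by
      rw [← Complex.exp_neg]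
      ring_nf
    have h3 : Complex.exp (-x * t) ≠ 0 := Complex.exp_ne_zero _
    have h4 : 1 - Complex.exp (-x * t) ≠ 0 := by
      intro h
      have : Complex.exp (-x * t) = 1 := (sub_eq_zero.1 h).symm
      rw [this] at hq
      simp at hq
    rw [h2]
    generalize Complex.exp (-x * t) = q at *
    have h5 : q⁻¹ - 1 = (1 - q) / q := by field_simp
    rw [h5]
    field_simp
end

section
/- For x in ℂ \ (-∞, 0], the Ramanujan period function satisfies the two-term relation 𝓕₁(x) = (1/x)·𝓕₁(1/x). -/
open MeasureTheory Set

open Filter Topology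

namespace Ram

lemma comb_mem {x : ℂ} (hx : x ∈ Complex.slitPlane) {a b : ℝ} (ha : 0 ≤ a) (hb : 0 ≤ b)
    (hab : 0 < a + b) : (a : ℂ) * x + b ∈ Complex.slitPlane := by
  rw [Complex.mem_slitPlane_iff] at hx ⊢
  simp only [Complex.add_re, Complex.mul_re, Complex.ofReal_re, Complex.ofReal_im, zero_mul,
    sub_zero, Complex.add_im, Complex.mul_im, add_zero]
  rcases ha.eq_or_lt with h | h
  · left; subst h; simpa using hab
  · rcases hx with hx | hx
    · left; positivity
    · right; exact mul_ne_zero h.ne' hx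

lemma comb_norm {x : ℂ} (hx : x ∈ Complex.slitPlane) :
    ∃ c : ℝ, 0 < c ∧ ∀ a b : ℝ, 0 ≤ a → 0 ≤ b → c * (a + b) ≤ ‖(a : ℂ) * x + b‖ := by
  have hc : ContinuousOn (fun t : ℝ => ‖(t : ℂ) * x + ((1 - t : ℝ) : ℂ)‖) (Icc 0 1) := by
    fun_prop
  obtain ⟨t, ht, hm⟩ := isCompact_Icc.exists_isMinOn (nonempty_Icc.2 zero_le_one) hc
  refine ⟨‖(t : ℂ) * x + ((1 - t : ℝ) : ℂ)‖, ?_, ?_⟩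
  · rw [norm_pos_iff]
    exact Complex.slitPlane_ne_zero (comb_mem hx ht.1 (by linarith [ht.2]) (by linarith))
  · intro a b ha hb
    rcases (add_nonneg ha hb).eq_or_lt with h | h
    · rw [← h]; simp
    · have := hm (show a / (a + b) ∈ Icc (0:ℝ) 1 from
        ⟨by positivity, by rw [div_le_one h]; linarith⟩)
      simp only [mem_ofPred_eq] at this
      have e : (a : ℂ) * x + b =
        ((a + b : ℝ) : ℂ) * (((a / (a + b) : ℝ) : ℂ) * x + ((1 - a / (a + b) : ℝ) : ℂ)) := by
        have : ((a : ℂ) + b) ≠ 0 := by exact_mod_cast h.ne'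
        push_cast
        field_simp
        ring
      rw [e, norm_mul, Complex.norm_real, Real.norm_of_nonneg h.le, mul_comm]
      gcongr

lemma hasDerivAt_line (w a : ℂ) (s : ℝ) :
    HasDerivAt (fun s : ℝ => w + (s : ℂ) * a) a s := by
  simpa using ((Complex.ofRealCLM.hasDerivAt (x := s)).mul_const a).const_add w

lemma hasDerivAt_logline {w a : ℂ} {s : ℝ} (h : w + (s : ℂ) * a ∈ Complex.slitPlane) :
    HasDerivAt (fun s : ℝ => Complex.log (w + (s : ℂ) * a)) (a / (w + s * a)) s :=
  (hasDerivAt_line w a s).clog_real h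

lemma ofReal_hasDerivAt (s : ℝ) : HasDerivAt (fun s : ℝ => (s : ℂ)) 1 s := by
  exact HasDerivAt.ofReal_comp (hasDerivAt_id s)

lemma trap1 {w : ℂ} {ρ : ℝ} (hρ : 0 < ρ)
    (hs : ∀ s ∈ Icc (0:ℝ) 1, w + (s : ℂ) * 1 ∈ Complex.slitPlane)
    (hn : ∀ s ∈ Icc (0:ℝ) 1, ρ ≤ ‖w + (s : ℂ) * 1‖) :
    ‖Complex.log (w + 1) - Complex.log w - 1 / 2 * (1 / w + 1 / (w + 1))‖ ≤ 1 / ρ ^ 3 := by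
  have hw : w ≠ 0 := by
    have := Complex.slitPlane_ne_zero (hs 0 (by simp)); simpa using this
  have hnw : ρ ≤ ‖w‖ := by have := hn 0 (by simp); simpa using this
  have key := norm_image_sub_le_of_norm_deriv_le_segment_01' (E := ℂ) (C := 1 / ρ ^ 3)
    (f := fun s : ℝ => Complex.log (w + (s : ℂ) * 1) - (s : ℂ) * (1 / 2 * (1 / w + (w + (s : ℂ) * 1)⁻¹)))
    (f' := fun s => - ((s : ℂ) ^ 2 / 2) * (w⁻¹ * (w + (s : ℂ) * 1)⁻¹ * (w + (s : ℂ) * 1)⁻¹)) ?_ ?_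
  · refine le_trans (le_of_eq ?_) key
    congr 1
    push_cast
    simp
    ring
  · intro s h
    have h0 := Complex.slitPlane_ne_zero (hs s h)
    apply HasDerivAt.hasDerivWithinAt
    have h1 := hasDerivAt_logline (hs s h)
    have h2 := (hasDerivAt_line w 1 s).inv h0
    have h3 := h1.sub ((ofReal_hasDerivAt s).mul ((h2.const_add (1 / w)).const_mul (1 / 2)))
    refine HasDerivAt.congr_deriv h3 ?_
    simp only [Pi.inv_apply]
    rw [mul_one] at h0
    simp only [mul_one]
    field_simp
    ring
  · intro s h
    have h' : s ∈ Icc (0:ℝ) 1 := ⟨h.1, h.2.le⟩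
    have hh := hn s h'
    rw [norm_mul, norm_mul, norm_mul, norm_inv, norm_inv, norm_neg, norm_div, norm_pow,
      Complex.norm_real, Real.norm_of_nonneg h.1]
    have : ‖(2:ℂ)‖ = 2 := by simp
    rw [this]
    have e : 1 / ρ ^ 3 = 1 * (ρ⁻¹ * ρ⁻¹ * ρ⁻¹) := by field_simp
    rw [e]
    gcongr
    nlinarith [h.1, h.2]

lemma q1 {w a : ℂ} {ρ : ℝ} (hρ : 0 < ρ)
    (hs : ∀ s ∈ Icc (0:ℝ) 1, w + (s : ℂ) * a ∈ Complex.slitPlane)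
    (hn : ∀ s ∈ Icc (0:ℝ) 1, ρ ≤ ‖w + (s : ℂ) * a‖) :
    ‖Complex.log (w + a) - Complex.log w - a / (w + a)‖ ≤ ‖a‖ ^ 2 / ρ ^ 2 := by
  have key := norm_image_sub_le_of_norm_deriv_le_segment_01' (E := ℂ) (C := ‖a‖ ^ 2 / ρ ^ 2)
    (f := fun s : ℝ => Complex.log (w + (s : ℂ) * a) - (s : ℂ) * (a * (w + (s : ℂ) * a)⁻¹))
    (f' := fun s => (s : ℂ) * (a ^ 2 * ((w + (s : ℂ) * a)⁻¹ ^ 2))) ?_ ?_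
  · refine le_trans (le_of_eq ?_) key
    congr 1
    push_cast
    simp
    ring
  · intro s h
    have h0 := Complex.slitPlane_ne_zero (hs s h)
    apply HasDerivAt.hasDerivWithinAt
    have h1 := hasDerivAt_logline (hs s h)
    have h2 := (hasDerivAt_line w a s).inv h0
    have h3 := h1.sub ((ofReal_hasDerivAt s).mul (h2.const_mul a))
    refine HasDerivAt.congr_deriv h3 ?_
    simp only [Pi.inv_apply]
    field_simp
    ring
  · intro s h
    have h' : s ∈ Icc (0:ℝ) 1 := ⟨h.1, h.2.le⟩
    have hh := hn s h'
    rw [norm_mul, norm_mul, norm_pow, norm_pow, norm_inv, 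
      Complex.norm_real, Real.norm_of_nonneg h.1]
    have e : ‖a‖ ^ 2 / ρ ^ 2 = 1 * (‖a‖ ^ 2 * ρ⁻¹ ^ 2) := by field_simp
    rw [e]
    gcongr
    exact h.2.le

noncomputable def P (w : ℂ) : ℂ := w * Complex.log w - w

lemma q2 {w a : ℂ} {ρ : ℝ} (hρ : 0 < ρ)
    (hs : ∀ s ∈ Icc (0:ℝ) 1, w + (s : ℂ) * a ∈ Complex.slitPlane)
    (hn : ∀ s ∈ Icc (0:ℝ) 1, ρ ≤ ‖w + (s : ℂ) * a‖) :
    ‖P (w + a) - P w - a / 2 * (Complex.log w + Complex.log (w + a))‖ ≤ ‖a‖ ^ 3 / ρ ^ 2 := by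
  have key := norm_image_sub_le_of_norm_deriv_le_segment_01' (E := ℂ) (C := ‖a‖ ^ 3 / ρ ^ 2)
    (f := fun s : ℝ => ((w + (s : ℂ) * a) * Complex.log (w + (s : ℂ) * a) - (w + (s : ℂ) * a))
      - (s : ℂ) * (a / 2 * (Complex.log w + Complex.log (w + (s : ℂ) * a))))
    (f' := fun s => a / 2 * (Complex.log (w + (s : ℂ) * a) - Complex.log w - 
      (s * a) / (w + (s : ℂ) * a))) ?_ ?_
  · refine le_trans (le_of_eq ?_) key
    congr 1
    push_cast
    simp [P]
    ring
  · intro s h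
    have h0 := Complex.slitPlane_ne_zero (hs s h)
    apply HasDerivAt.hasDerivWithinAt
    have h1 := hasDerivAt_logline (hs s h)
    have h2 := hasDerivAt_line w a s
    have h3 := ((h2.mul h1).sub h2).sub
      ((ofReal_hasDerivAt s).mul ((h1.const_add (Complex.log w)).const_mul (a / 2)))
    refine HasDerivAt.congr_deriv h3 ?_
    rw [mul_div_cancel₀ _ h0]
    field_simp
    ring
  · intro s h
    have h' : s ∈ Icc (0:ℝ) 1 := ⟨h.1, h.2.le⟩
    have := q1 (w := w) (a := s * a) hρ (fun t ht => by
        have := hs (t * s) ⟨mul_nonneg ht.1 h.1, by nlinarith [ht.1, ht.2, h.1, h.2]⟩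
        push_cast at this
        rwa [← mul_assoc])
      (fun t ht => by
        have := hn (t * s) ⟨mul_nonneg ht.1 h.1, by nlinarith [ht.1, ht.2, h.1, h.2]⟩
        push_cast at this
        rwa [← mul_assoc])
    rw [norm_mul]
    have e : ‖a‖ ^ 3 / ρ ^ 2 = ‖a‖ * (‖a‖ ^ 2 / ρ ^ 2) := by ring
    rw [e]
    gcongr
    · rw [norm_div]; simp
    · refine this.trans ?_
      rw [norm_mul, Complex.norm_real, Real.norm_of_nonneg h.1]
      have h5 := mul_nonneg h.1 (norm_nonneg a)
      have h6 := mul_le_of_le_one_left (norm_nonneg a) h.2.le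
      gcongr


/-- terms of the logarithmic Euler product -/
noncomputable def u (k : ℕ) (s : ℂ) : ℂ :=
  s * ((Real.log (k + 2) - Real.log (k + 1) : ℝ) : ℂ)
    - (Complex.log (s + (k + 1)) - ((Real.log (k + 1) : ℝ) : ℂ))

noncomputable def d (k : ℕ) (s : ℂ) : ℂ :=
  ((Real.log (k + 2) - Real.log (k + 1) : ℝ) : ℂ) - (s + (k + 1))⁻¹

lemma re_pos_mem {s : ℂ} (hs : 0 < s.re) (k : ℕ) : s + (k + 1) ∈ Complex.slitPlane := by
  rw [Complex.mem_slitPlane_iff]; left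
  simp
  positivity

lemma hasDerivAt_u {s : ℂ} (hs : 0 < s.re) (k : ℕ) : HasDerivAt (u k) (d k s) s := by
  have h1 : HasDerivAt (fun s : ℂ => Complex.log (s + (k + 1))) (1 / (s + (k + 1))) s :=
    ((hasDerivAt_id s).add_const _).clog (re_pos_mem hs k)
  have := ((hasDerivAt_id s).mul_const ((Real.log (k + 2) - Real.log (k + 1) : ℝ) : ℂ)).sub
    (h1.sub_const ((Real.log (k + 1) : ℝ) : ℂ))
  refine HasDerivAt.congr_deriv this ?_
  simp [d]

lemma u_one (k : ℕ) : u k 1 = 0 := by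
  unfold u
  have : (1 : ℂ) + (k + 1) = ((k + 2 : ℝ) : ℂ) := by push_cast; ring
  rw [this, ← Complex.ofReal_log (by positivity)]
  push_cast
  ring

lemma d_bound {s : ℂ} (hs : 0 < s.re) {R : ℝ} (hR : ‖s‖ < R) (k : ℕ) :
    ‖d k s‖ ≤ (R + 2) * (1 / ((k : ℝ) + 1) ^ 2) := by
  have hk : (0:ℝ) < k + 1 := by positivity
  have h1 := q1 (w := (k : ℂ) + 1) (a := 1) (ρ := (k : ℝ) + 1) hk
    (fun t ht => by
      rw [Complex.mem_slitPlane_iff]; left; simp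
      linarith [ht.1])
    (fun t ht => by
      refine le_trans ?_ (Complex.re_le_norm _)
      simp
      exact ht.1)
  have e1 : Complex.log ((k : ℂ) + 1 + 1) = ((Real.log (k + 2) : ℝ) : ℂ) := by
    rw [Complex.ofReal_log (by positivity)]; congr 1; push_cast; ring
  have e2 : Complex.log ((k : ℂ) + 1) = ((Real.log (k + 1) : ℝ) : ℂ) := by
    rw [Complex.ofReal_log (by positivity)]; congr 1; push_cast; ring
  rw [e1, e2] at h1
  have n1 : (s + (k + 1)) ≠ 0 := Complex.slitPlane_ne_zero (re_pos_mem hs k)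
  have n2 : ((k:ℂ) + 1 + 1) ≠ 0 := by exact_mod_cast (show ((k + 1 + 1 : ℕ)) ≠ 0 by omega)
  have e3 : d k s = (((Real.log (k + 2) : ℝ) : ℂ) - ((Real.log (k + 1) : ℝ) : ℂ) - 1 / ((k:ℂ) + 1 + 1))
     + (s - 1) * ((s + (k + 1))⁻¹ * ((k : ℂ) + 1 + 1)⁻¹) := by
    unfold d
    push_cast
    field_simp
    ring
  have b1 : (k : ℝ) + 1 ≤ ‖s + (k + 1)‖ := by
    refine le_trans ?_ (Complex.re_le_norm _)
    simp
    exact hs.le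
  have b2 : (k : ℝ) + 1 ≤ ‖(k : ℂ) + 1 + 1‖ := by
    refine le_trans ?_ (Complex.re_le_norm _)
    simp
  have b3 : ‖s - 1‖ ≤ R + 1 := by
    refine (norm_sub_le _ _).trans ?_
    simp
    exact hR.le
  have b4 : ‖(s - 1) * ((s + (k + 1))⁻¹ * ((k : ℂ) + 1 + 1)⁻¹)‖ ≤
      (R + 1) * (((k:ℝ) + 1)⁻¹ * ((k:ℝ) + 1)⁻¹) := by
    rw [norm_mul, norm_mul, norm_inv, norm_inv]
    have : 0 ≤ R + 1 := (norm_nonneg _).trans b3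
    gcongr
  rw [e3]
  refine (norm_add_le _ _).trans ((add_le_add h1 b4).trans (le_of_eq ?_))
  simp
  field_simp
  ring

lemma summable_bd (R : ℝ) : Summable fun k : ℕ => (R + 2) * (1 / ((k : ℝ) + 1) ^ 2) := by
  apply Summable.mul_left
  have := (summable_nat_add_iff 1).2 (Real.summable_one_div_nat_pow.2 (one_lt_two))
  simpa using this

lemma hasDerivAt_U {s : ℂ} (hs : 0 < s.re) :
    HasDerivAt (fun z => ∑' k, u k z) (∑' k, d k s) s ∧ Summable (fun k => d k s)
      ∧ Summable (fun k => u k s) := by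
  set t : Set ℂ := {z | 0 < z.re} ∩ Metric.ball 0 (‖s‖ + 2) with ht
  have hcv : Convex ℝ t := (convex_halfSpace_re_gt 0).inter (convex_ball _ _)
  have hop : IsOpen t := (isOpen_lt continuous_const Complex.continuous_re).inter Metric.isOpen_ball
  have hst : s ∈ t := ⟨hs, by simp⟩
  have h1t : (1 : ℂ) ∈ t := ⟨by simp, by simp; linarith [norm_nonneg s]⟩
  have hb : ∀ n y, y ∈ t → ‖d n y‖ ≤ ((‖s‖ + 2) + 2) * (1 / ((n : ℝ) + 1) ^ 2) :=
    fun n y hy => d_bound hy.1 (by simpa using hy.2) n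
  have h0 : Summable fun n => u n 1 := by simp only [u_one]; exact summable_zero
  refine ⟨hasDerivAt_tsum_of_isPreconnected (summable_bd _) hop hcv.isPreconnected
    (fun n y hy => hasDerivAt_u hy.1 n) hb h1t h0 hst, ?_, ?_⟩
  · exact Summable.of_norm_bounded (summable_bd _) (fun n => hb n s hst)
  · exact summable_of_summable_hasDerivAt_of_isPreconnected (summable_bd _) hop hcv.isPreconnected
      (fun n y hy => hasDerivAt_u hy.1 n) hb h1t h0 hst

lemma sum_u {s : ℂ} (hs : 0 < s.re) (n : ℕ) :
    Complex.exp (∑ k ∈ Finset.range n, u k s) * (∏ j ∈ Finset.range n, (s + (j + 1))) =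
      ((n + 1 : ℕ) : ℂ) ^ s * (n.factorial : ℂ) := by
  induction n with
  | zero => simp
  | succ n ih =>
    rw [Finset.sum_range_succ, Finset.prod_range_succ, Complex.exp_add]
    have hn : s + (n + 1) ≠ 0 := Complex.slitPlane_ne_zero (re_pos_mem hs n)
    have e : Complex.exp (u n s) * (s + (n + 1)) * ((n + 1 : ℕ) : ℂ) ^ s =
        ((n + 1 + 1 : ℕ) : ℂ) ^ s * (n + 1 : ℂ) := by
      rw [Complex.cpow_def_of_ne_zero (Nat.cast_ne_zero.2 (Nat.succ_ne_zero _)),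
        Complex.cpow_def_of_ne_zero (Nat.cast_ne_zero.2 (Nat.succ_ne_zero _)),
        ← Complex.natCast_log, ← Complex.natCast_log]
      have e1 : (n + 1 : ℂ) = Complex.exp ((Real.log (n + 1) : ℝ) : ℂ) := by
        rw [← Complex.ofReal_exp, Real.exp_log (by positivity)]; push_cast; rfl
      rw [show Complex.exp (u n s) * (s + (n + 1)) = Complex.exp (u n s) *
        Complex.exp (Complex.log (s + (n + 1))) by rw [Complex.exp_log hn]]
      conv_rhs => rw [e1]
      rw [← Complex.exp_add, ← Complex.exp_add, ← Complex.exp_add]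
      congr 1
      unfold u
      have : ((n + 1 + 1 : ℕ) : ℝ) = n + 2 := by push_cast; ring
      rw [this]
      push_cast
      ring
    rw [Nat.factorial_succ]
    push_cast at ih e ⊢
    linear_combination (Complex.exp (u n s) * (s + (n + 1))) * ih + (n.factorial : ℂ) * e

lemma tendsto_inv_nat (z : ℂ) : Tendsto (fun n : ℕ => z / ((n : ℂ) + 1)) atTop (𝓝 0) := by
  have := (tendsto_one_div_add_atTop_nhds_zero_nat (𝕜 := ℂ)).const_mul z
  simpa [div_eq_mul_inv] using this

lemma exp_U {s : ℂ} (hs : 0 < s.re) :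
    Complex.exp (∑' k, u k s) = Complex.Gamma s * s := by
  have hs0 : s ≠ 0 := by rintro rfl; simp at hs
  have h1 := (Complex.continuous_exp.tendsto _).comp (hasDerivAt_U hs).2.2.hasSum.tendsto_sum_nat
  have h2 : Tendsto (fun n : ℕ => Complex.GammaSeq s (n + 1) * s * (1 + s / ((n : ℂ) + 1))) atTop
      (𝓝 (Complex.Gamma s * s * (1 + 0))) :=
    (((Complex.GammaSeq_tendsto_Gamma s).comp (tendsto_add_atTop_nat 1)).mul_const s).mul
      ((tendsto_inv_nat s).const_add 1)
  rw [add_zero, mul_one] at h2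
  refine tendsto_nhds_unique h1 (h2.congr fun n => ?_)
  simp only [Function.comp]
  have hp : ∏ j ∈ Finset.range n, (s + (j + 1)) ≠ 0 :=
    Finset.prod_ne_zero_iff.2 fun j _ => Complex.slitPlane_ne_zero (re_pos_mem hs j)
  rw [Complex.GammaSeq, Finset.prod_range_succ', Finset.prod_range_succ]
  have := sum_u hs n
  rw [← eq_div_iff hp] at this
  rw [this, Nat.factorial_succ]
  have hn : s + (n + 1) ≠ 0 := Complex.slitPlane_ne_zero (re_pos_mem hs n)
  have hn' : (n + 1 : ℂ) ≠ 0 := by exact_mod_cast Nat.succ_ne_zero n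
  push_cast
  simp only [add_zero]
  field_simp
  ring

lemma sum_d (s : ℂ) (n : ℕ) : ∑ k ∈ Finset.range n, d k s =
    ((Real.log (n + 1) : ℝ) : ℂ) - ∑ k ∈ Finset.range n, (s + (k + 1))⁻¹ := by
  induction n with
  | zero => simp
  | succ n ih =>
    rw [Finset.sum_range_succ, Finset.sum_range_succ, ih, d]
    have : ((n + 1 : ℕ) : ℝ) + 1 = n + 2 := by push_cast; ring
    rw [this]
    push_cast
    ring

def T (s : ℂ) : Prop := Tendsto (fun n : ℕ => ((Real.log (n + 1) : ℝ) : ℂ)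
  - ∑ k ∈ Finset.range (n + 1), (s + k)⁻¹) atTop (𝓝 (digammaC s))

lemma T_of_re_pos {s : ℂ} (hs : 0 < s.re) : T s := by
  have hs0 : s ≠ 0 := by rintro rfl; simp at hs
  obtain ⟨h1, h2, -⟩ := hasDerivAt_U hs
  have h3 : HasDerivAt Complex.Gamma (Complex.Gamma s * (∑' k, d k s - s⁻¹)) s := by
    have h4 : HasDerivAt (fun z => Complex.exp (∑' k, u k z) * z⁻¹) _ s :=
      h1.cexp.mul (hasDerivAt_inv hs0)
    have h5 : Complex.Gamma =ᶠ[𝓝 s] (fun z => Complex.exp (∑' k, u k z) * z⁻¹) := by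
      filter_upwards [(isOpen_lt continuous_const Complex.continuous_re).mem_nhds hs] with z hz
      rw [exp_U hz]
      have hz0 : z ≠ 0 := by rintro rfl; simp at hz
      field_simp
    refine (h4.congr_of_eventuallyEq h5).congr_deriv ?_
    rw [exp_U hs]
    field_simp
    ring
  have hG : Complex.Gamma s ≠ 0 := Complex.Gamma_ne_zero_of_re_pos hs
  have h6 : digammaC s = ∑' k, d k s - s⁻¹ := by
    rw [digammaC, h3.deriv]; field_simp
  unfold T
  rw [h6]
  refine (h2.hasSum.tendsto_sum_nat.sub_const s⁻¹).congr fun n => ?_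
  rw [sum_d, Finset.sum_range_succ']
  push_cast
  simp
  ring

lemma T_step {s : ℂ} (hs : s ∈ Complex.slitPlane) (h : T (s + 1)) : T s := by
  have hk : ∀ k : ℕ, s + k ≠ 0 := fun k => by
    have := comb_mem hs (a := 1) (b := k) (by simp) (by simp) (by positivity)
    simpa using Complex.slitPlane_ne_zero this
  have h1 : digammaC (s + 1) = digammaC s + s⁻¹ :=
    Complex.digamma_apply_add_one s (fun m hm => hk m (by rw [hm]; ring))
  unfold T at h ⊢
  rw [h1] at h
  have h2 : Tendsto (fun n : ℕ => (s + ((n : ℂ) + 1))⁻¹) atTop (𝓝 0) := by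
    have a1 := tendsto_inv_nat 1
    have a2 := (tendsto_inv_nat s).const_add 1
    have a3 := a1.mul (a2.inv₀ (by simp))
    rw [zero_mul] at a3
    refine a3.congr fun n => ?_
    have hn' : (n + 1 : ℂ) ≠ 0 := by exact_mod_cast Nat.succ_ne_zero n
    have := hk (n + 1)
    push_cast at this
    have h3 : (n + 1 + s : ℂ) ≠ 0 := by rwa [add_comm]
    field_simp
    ring
  have h3 := (h.sub_const s⁻¹).add h2
  rw [add_zero, add_sub_cancel_right] at h3
  refine h3.congr fun n => ?_
  have : ∑ k ∈ Finset.range (n + 1), (s + k)⁻¹ + (s + ((n : ℂ) + 1))⁻¹ =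
    ∑ k ∈ Finset.range (n + 1), (s + 1 + k)⁻¹ + s⁻¹ := by
    have e1 := Finset.sum_range_succ (fun k : ℕ => (s + k)⁻¹) (n + 1)
    have e2 := Finset.sum_range_succ' (fun k : ℕ => (s + k)⁻¹) (n + 1)
    rw [e1] at e2
    push_cast at e2
    rw [add_zero] at e2
    rw [e2]
    congr 1
    refine Finset.sum_congr rfl fun k _ => ?_
    congr 1; ring
  linear_combination this

lemma T_slit {s : ℂ} (hs : s ∈ Complex.slitPlane) : T s := by
  obtain ⟨m, hm⟩ := exists_nat_gt (-s.re)
  have : ∀ m : ℕ, ∀ s ∈ Complex.slitPlane, -s.re < m → T s := by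
    intro m
    induction m with
    | zero => intro s _ h; exact T_of_re_pos (by simpa using h)
    | succ m ih =>
      intro s hs h
      refine T_step hs (ih _ ?_ ?_)
      · have := comb_mem hs (a := 1) (b := 1) (by simp) (by simp) (by norm_num)
        simpa using this
      · push_cast at h; simp; linarith
  exact this m s hs hm

noncomputable def g (w : ℂ) : ℂ :=
  Complex.log (w + 1) - Complex.log w - 1 / 2 * (1 / w + 1 / (w + 1))

lemma sum_g (z : ℂ) (K : ℕ) : ∑ k ∈ Finset.range K, g (z + k) =
    Complex.log (z + K) - Complex.log z - ∑ k ∈ Finset.range K, (z + k)⁻¹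
      + 1 / 2 * z⁻¹ - 1 / 2 * (z + K)⁻¹ := by
  induction K with
  | zero => simp
  | succ K ih =>
    rw [Finset.sum_range_succ, Finset.sum_range_succ, ih, g]
    push_cast
    rw [← add_assoc]
    ring

lemma slit_add_ne {s : ℂ} (hs : s ∈ Complex.slitPlane) (k : ℕ) : s + k ≠ 0 := by
  have := comb_mem hs (a := 1) (b := k) (by simp) (by simp) (by positivity)
  simpa using Complex.slitPlane_ne_zero this

lemma log_nat_mul {n : ℕ} (hn : n ≠ 0) {z : ℂ} (hz : z ≠ 0) :
    Complex.log ((n : ℂ) * z) = ((Real.log n : ℝ) : ℂ) + Complex.log z := by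
  have := Complex.log_ofReal_mul (r := n) (by positivity) hz
  simpa using this

lemma tendsto_inner {z : ℂ} (hz : z ∈ Complex.slitPlane) :
    Tendsto (fun K : ℕ => ∑ k ∈ Finset.range K, g (z + k)) atTop
      (𝓝 (digammaC z - Complex.log z + 1 / (2 * z))) := by
  rw [← tendsto_add_atTop_iff_nat 1]
  have h1 := T_slit hz
  have h2 : Tendsto (fun n : ℕ => Complex.log (1 + z / ((n : ℂ) + 1))) atTop (𝓝 0) := by
    have := ((tendsto_inv_nat z).const_add 1).clog (by simp)
    simpa using this
  have h3 : Tendsto (fun n : ℕ => (z + ((n : ℂ) + 1))⁻¹) atTop (𝓝 0) := by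
    have a3 := (tendsto_inv_nat 1).mul (((tendsto_inv_nat z).const_add 1).inv₀ (by simp))
    rw [zero_mul] at a3
    refine a3.congr fun n => ?_
    have hn' : (n + 1 : ℂ) ≠ 0 := by exact_mod_cast Nat.succ_ne_zero n
    have := slit_add_ne hz (n + 1)
    push_cast at this
    have h3 : (n + 1 + z : ℂ) ≠ 0 := by rwa [add_comm]
    field_simp
    ring
  have h4 := ((h1.add h2).sub_const (Complex.log z - 1 / 2 * z⁻¹)).sub (h3.const_mul (1 / 2))
  have e : digammaC z + 0 - (Complex.log z - 1 / 2 * z⁻¹) - 1 / 2 * 0 =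
    digammaC z - Complex.log z + 1 / (2 * z) := by
    rw [one_div (2 * z), mul_inv]; ring
  rw [e] at h4
  refine h4.congr fun n => ?_
  rw [sum_g]
  have hn' : (n + 1 : ℂ) ≠ 0 := by exact_mod_cast Nat.succ_ne_zero n
  have hne := slit_add_ne hz (n + 1)
  have hne2 : 1 + z / ((n : ℂ) + 1) ≠ 0 := by
    intro h
    apply hne
    push_cast
    field_simp at h
    linear_combination h
  have e2 : z + ((n + 1 : ℕ) : ℂ) = ((n + 1 : ℕ) : ℂ) * (1 + z / ((n : ℂ) + 1)) := by
    push_cast; field_simp; ring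
  have e3 : Complex.log (z + ((n + 1 : ℕ) : ℂ)) =
      ((Real.log (n + 1) : ℝ) : ℂ) + Complex.log (1 + z / ((n : ℂ) + 1)) := by
    rw [e2, log_nat_mul (Nat.succ_ne_zero n) hne2]; push_cast; rfl
  rw [e3]
  push_cast
  ring

lemma summable_g {x : ℂ} (hx : x ∈ Complex.slitPlane) :
    Summable fun p : ℕ × ℕ => g (((p.1 : ℂ) + 1) * x + p.2) := by
  obtain ⟨c, hc, hcb⟩ := comb_norm hx
  have h1 : Summable fun n : ℕ => 1 / ((n : ℝ) + 1) ^ (3 / 2 : ℝ) := by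
    have := (summable_nat_add_iff 1).2
      (Real.summable_one_div_nat_rpow.2 (show (1:ℝ) < 3 / 2 by norm_num))
    simpa using this
  have h2 := (h1.mul_of_nonneg h1 (fun n => by simp only [Pi.zero_apply]; positivity)
    (fun n => by simp only [Pi.zero_apply]; positivity)).mul_left (1 / c ^ 3)
  refine Summable.of_norm_bounded h2 ?_
  rintro ⟨n, k⟩
  simp only
  have hp : (0:ℝ) < (n : ℝ) + 1 + k := by positivity
  have := trap1 (w := ((n : ℂ) + 1) * x + k) (ρ := c * ((n : ℝ) + 1 + k)) (by positivity)
    (fun s hs => by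
      have := comb_mem hx (a := n + 1) (b := k + s) (by positivity)
        (add_nonneg (by positivity) hs.1) (by linarith [hs.1])
      push_cast at this
      rwa [mul_one, add_assoc])
    (fun s hs => by
      have := hcb (n + 1) (k + s) (by positivity) (add_nonneg (by positivity) hs.1)
      push_cast at this
      rw [mul_one, add_assoc (((n : ℂ) + 1) * x)]
      refine le_trans ?_ this
      gcongr
      linarith [hs.1])
  refine this.trans ?_
  rw [mul_pow, one_div_mul_one_div, one_div_mul_one_div]
  gcongr
  rw [← Real.mul_rpow (by positivity) (by positivity)]
  have e : ((n : ℝ) + 1 + k) ^ 3 = (((n : ℝ) + 1 + k) ^ 2) ^ (3 / 2 : ℝ) := by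
    rw [← Real.rpow_natCast, ← Real.rpow_natCast, ← Real.rpow_mul hp.le]
    norm_num
  rw [e]
  apply Real.rpow_le_rpow (by positivity) _ (by norm_num)
  nlinarith [mul_nonneg (Nat.cast_nonneg (α := ℝ) n) (Nat.cast_nonneg (α := ℝ) k),
    Nat.cast_nonneg (α := ℝ) n, Nat.cast_nonneg (α := ℝ) k, sq_nonneg (n:ℝ), sq_nonneg (k:ℝ)]

noncomputable def G (x : ℂ) (N : ℕ) : ℂ :=
  ∑ n ∈ Finset.range N, ∑ k ∈ Finset.range N, g (((n : ℂ) + 1) * x + k)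

lemma nat_mul_mem {x : ℂ} (hx : x ∈ Complex.slitPlane) (n : ℕ) :
    ((n : ℂ) + 1) * x ∈ Complex.slitPlane := by
  have := comb_mem hx (a := n + 1) (b := 0) (by positivity) le_rfl (by positivity)
  push_cast at this
  simpa using this

lemma G_tendsto {x : ℂ} (hx : x ∈ Complex.slitPlane) : Tendsto (G x) atTop (𝓝 (S1 x)) := by
  have hs := summable_g hx
  have h1 := hs.hasSum.prod_fiberwise (fun n => (hs.prod_factor n).hasSum)
  have h2 : S1 x = ∑' p : ℕ × ℕ, g (((p.1 : ℂ) + 1) * x + p.2) := by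
    rw [← h1.tsum_eq, S1]
    refine tsum_congr fun n => ?_
    have a := tendsto_inner (nat_mul_mem hx n)
    have b := (hs.prod_factor n).hasSum.tendsto_sum_nat
    rw [tendsto_nhds_unique b a]
    ring
  rw [h2]
  have h3 : Tendsto (fun N : ℕ => Finset.range N ×ˢ Finset.range N) atTop atTop := by
    refine tendsto_atTop_finset_of_monotone ?_ ?_
    · intro a b h
      have := Finset.range_mono h
      exact Finset.product_subset_product this this
    · rintro ⟨a, b⟩
      refine ⟨a + b + 1, ?_⟩
      simp
  refine (hs.hasSum.comp h3).congr fun N => ?_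
  simp only [Function.comp, G]
  rw [Finset.sum_product]

lemma squeeze {e : ℕ → ℕ → ℂ} {C c : ℝ} (hc : 0 < c)
    (h : ∀ N n : ℕ, 0 < N → n < N → ‖e N n‖ ≤ C / (c * N) ^ 2) :
    Tendsto (fun N => ∑ n ∈ Finset.range N, e N n) atTop (𝓝 0) := by
  have h0 : Tendsto (fun N : ℕ => C / c ^ 2 / (N : ℝ)) atTop (𝓝 0) :=
    tendsto_const_div_atTop_nhds_zero_nat _
  refine squeeze_zero_norm' ?_ h0
  filter_upwards [eventually_gt_atTop 0] with N hN
  have hN' : (0:ℝ) < N := by exact_mod_cast hN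
  refine (norm_sum_le_of_le _ (fun n hn => h N n hN (Finset.mem_range.1 hn))).trans (le_of_eq ?_)
  simp
  field_simp

lemma one_add_mem {x : ℂ} (hx : x ∈ Complex.slitPlane) : 1 + x ∈ Complex.slitPlane := by
  have := comb_mem hx (a := 1) (b := 1) (by simp) (by simp) (by norm_num)
  rw [add_comm]
  simpa using this

lemma line_mem {x : ℂ} (hx : x ∈ Complex.slitPlane) {N n : ℕ} (hN : 0 < N) :
    ∀ s ∈ Icc (0:ℝ) 1, ((N : ℂ) + n * x) + (s : ℂ) * x ∈ Complex.slitPlane := by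
  intro s hs
  have hN' : (0:ℝ) < N := by exact_mod_cast hN
  have hn : (0:ℝ) ≤ n := by positivity
  have := comb_mem hx (a := n + s) (b := N) (by linarith [hs.1]) (by positivity)
    (by linarith [hs.1])
  push_cast at this
  convert this using 1
  ring

lemma line_norm {x : ℂ} {c : ℝ} (hc : 0 < c)
    (hcb : ∀ a b : ℝ, 0 ≤ a → 0 ≤ b → c * (a + b) ≤ ‖(a : ℂ) * x + b‖) {N n : ℕ} :
    ∀ s ∈ Icc (0:ℝ) 1, c * N ≤ ‖((N : ℂ) + n * x) + (s : ℂ) * x‖ := by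
  intro s hs
  have hn : (0:ℝ) ≤ n := by positivity
  have := hcb (n + s) N (by linarith [hs.1]) (by positivity)
  push_cast at this
  have e : ((N : ℂ) + n * x) + (s : ℂ) * x = (n + s) * x + N := by ring
  rw [e]
  refine le_trans ?_ this
  gcongr
  linarith [hs.1]

lemma log_end {x : ℂ} (hx : x ∈ Complex.slitPlane) {N : ℕ} (hN : 0 < N) :
    Complex.log ((N : ℂ) + N * x) = ((Real.log N : ℝ) : ℂ) + Complex.log (1 + x) := by
  rw [← log_nat_mul hN.ne' (Complex.slitPlane_ne_zero (one_add_mem hx))]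
  congr 1; ring

lemma asym_b {x : ℂ} (hx : x ∈ Complex.slitPlane) :
    Tendsto (fun N : ℕ => Complex.log (1 + x)
      - x * ∑ n ∈ Finset.range N, (((n : ℂ) + 1) * x + N)⁻¹) atTop (𝓝 0) := by
  obtain ⟨c, hc, hcb⟩ := comb_norm hx
  have h := squeeze (e := fun N n => Complex.log (((N : ℂ) + n * x) + x)
      - Complex.log ((N : ℂ) + n * x) - x / (((N : ℂ) + n * x) + x)) (C := ‖x‖ ^ 2) hc
    (fun N n hN _ => q1 (mul_pos hc (by exact_mod_cast hN)) (line_mem hx hN) (line_norm hc hcb))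
  refine h.congr' ?_
  filter_upwards [eventually_gt_atTop 0] with N hN
  have e1 := Finset.sum_range_sub (fun n : ℕ => Complex.log ((N : ℂ) + n * x)) N
  rw [log_end hx hN] at e1
  simp only [Nat.cast_zero, zero_mul, add_zero, ← Complex.natCast_log, add_sub_cancel_left] at e1
  rw [← e1, Finset.mul_sum, ← Finset.sum_sub_distrib]
  refine Finset.sum_congr rfl fun n _ => ?_
  have e2 : (N : ℂ) + n * x + x = ((n : ℂ) + 1) * x + N := by ring
  have e3 : (N : ℂ) + ((n + 1 : ℕ) : ℂ) * x = ((n : ℂ) + 1) * x + N := by push_cast; ring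
  rw [e2, e3, div_eq_mul_inv]

lemma asym_c {x : ℂ} (hx : x ∈ Complex.slitPlane) :
    Tendsto (fun N : ℕ => (N * x * ((Real.log N : ℝ) : ℂ) + N * (1 + x) * Complex.log (1 + x) - N * x
      + x / 2 * Complex.log (1 + x))
      - x * ∑ n ∈ Finset.range N, Complex.log (((n : ℂ) + 1) * x + N)) atTop (𝓝 0) := by
  obtain ⟨c, hc, hcb⟩ := comb_norm hx
  have h := squeeze (e := fun N n => P (((N : ℂ) + n * x) + x)
      - P ((N : ℂ) + n * x) - x / 2 * (Complex.log ((N : ℂ) + n * x)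
        + Complex.log (((N : ℂ) + n * x) + x))) (C := ‖x‖ ^ 3) hc
    (fun N n hN _ => q2 (mul_pos hc (by exact_mod_cast hN)) (line_mem hx hN) (line_norm hc hcb))
  refine h.congr' ?_
  filter_upwards [eventually_gt_atTop 0] with N hN
  have e1 := Finset.sum_range_sub (fun n : ℕ => P ((N : ℂ) + n * x)
    + x / 2 * Complex.log ((N : ℂ) + n * x)) N
  simp only [P] at e1
  rw [log_end hx hN] at e1
  simp only [Nat.cast_zero, zero_mul, add_zero, ← Complex.natCast_log] at e1
  have e4 : (N * x * ((Real.log N : ℝ) : ℂ) + N * (1 + x) * Complex.log (1 + x) - N * x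
      + x / 2 * Complex.log (1 + x)) = ∑ n ∈ Finset.range N,
      (((N + ((n + 1 : ℕ) : ℂ) * x) * Complex.log (N + ((n + 1 : ℕ) : ℂ) * x)
        - (N + ((n + 1 : ℕ) : ℂ) * x) + x / 2 * Complex.log (N + ((n + 1 : ℕ) : ℂ) * x))
        - ((N + (n : ℂ) * x) * Complex.log (N + (n : ℂ) * x)
        - (N + (n : ℂ) * x) + x / 2 * Complex.log (N + (n : ℂ) * x))) := by
    rw [e1]; ring
  rw [e4, Finset.mul_sum, ← Finset.sum_sub_distrib]
  refine Finset.sum_congr rfl fun n _ => ?_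
  have e2 : (N : ℂ) + n * x + x = ((n : ℂ) + 1) * x + N := by ring
  have e3 : (N : ℂ) + ((n + 1 : ℕ) : ℂ) * x = ((n : ℂ) + 1) * x + N := by push_cast; ring
  simp only [P]
  rw [e2, e3]
  ring

lemma asym_d : Tendsto (fun N : ℕ => ((Real.log N.factorial
    - (N * Real.log N - N + 1 / 2 * Real.log (2 * Real.pi) + 1 / 2 * Real.log N) : ℝ) : ℂ))
    atTop (𝓝 0) := by
  have h1 := (Stirling.tendsto_stirlingSeq_sqrt_pi).log (by positivity)
  have h2 := h1.sub_const (Real.log √Real.pi)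
  rw [sub_self] at h2
  have h3 := (Complex.continuous_ofReal.tendsto _).comp h2
  rw [Complex.ofReal_zero] at h3
  refine h3.congr' ?_
  filter_upwards [eventually_gt_atTop 0] with N hN
  have hN' : (0:ℝ) < N := by exact_mod_cast hN
  simp only [Function.comp]
  congr 1
  rw [Stirling.log_stirlingSeq_formula, Real.log_div (by positivity) (by positivity), Real.log_exp,
    Real.log_mul (by norm_num) (by positivity), Real.log_mul (by norm_num) (by positivity),
    Real.log_sqrt (by positivity)]
  ring

lemma asym_e : Tendsto (fun N : ℕ => (∑ n ∈ Finset.range N, ((n : ℂ) + 1)⁻¹)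
    - ((Real.log N : ℝ) : ℂ) - (Real.eulerMascheroniConstant : ℂ)) atTop (𝓝 0) := by
  have h2 := Real.tendsto_harmonic_sub_log.sub_const Real.eulerMascheroniConstant
  rw [sub_self] at h2
  have h3 := (Complex.continuous_ofReal.tendsto _).comp h2
  rw [Complex.ofReal_zero] at h3
  refine h3.congr fun N => ?_
  simp only [Function.comp, harmonic]
  push_cast
  rfl

lemma sum_a {x : ℂ} (hx : x ∈ Complex.slitPlane) (N : ℕ) :
    ∑ n ∈ Finset.range N, Complex.log (((n : ℂ) + 1) * x) =
      N * Complex.log x + ((Real.log N.factorial : ℝ) : ℂ) := by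
  induction N with
  | zero => simp
  | succ N ih =>
    have := log_nat_mul (Nat.succ_ne_zero N) (Complex.slitPlane_ne_zero hx)
    push_cast at this
    rw [Finset.sum_range_succ, ih, this, Nat.factorial_succ]
    push_cast
    rw [Real.log_mul (by positivity) (by positivity)]
    push_cast
    ring

noncomputable def A (x : ℂ) (N : ℕ) : ℂ :=
  ∑ n ∈ Finset.range N, ∑ m ∈ Finset.range N, (((n : ℂ) + 1) * x + (m + 1))⁻¹

noncomputable def M (x : ℂ) (N : ℕ) : ℂ :=
  N * ((1 + x) / x * Complex.log (1 + x) - Complex.log x) + (1 + 1 / x) / 2 * Complex.log (1 + x)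
    - 1 / 2 * ((Real.log (2 * Real.pi) : ℝ) : ℂ) - 1 / 2 * (1 + 1 / x) * ((Real.log N : ℝ) : ℂ)
    - Real.eulerMascheroniConstant / (2 * x)

lemma G_add_A (x : ℂ) (N : ℕ) : G x N + A x N =
    ∑ n ∈ Finset.range N, Complex.log (((n : ℂ) + 1) * x + N)
    - ∑ n ∈ Finset.range N, Complex.log (((n : ℂ) + 1) * x)
    - 1 / 2 * x⁻¹ * ∑ n ∈ Finset.range N, ((n : ℂ) + 1)⁻¹
    + 1 / 2 * ∑ n ∈ Finset.range N, (((n : ℂ) + 1) * x + N)⁻¹ := by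
  unfold G A
  rw [Finset.mul_sum, Finset.mul_sum, ← Finset.sum_add_distrib, ← Finset.sum_sub_distrib,
    ← Finset.sum_sub_distrib, ← Finset.sum_add_distrib]
  refine Finset.sum_congr rfl fun n _ => ?_
  rw [sum_g]
  set z := ((n : ℂ) + 1) * x with hz
  have e1 := Finset.sum_range_succ (fun k : ℕ => (z + k)⁻¹) N
  have e2 := Finset.sum_range_succ' (fun k : ℕ => (z + k)⁻¹) N
  rw [e1] at e2
  push_cast at e2
  rw [add_zero] at e2
  have e3 : z⁻¹ = ((n : ℂ) + 1)⁻¹ * x⁻¹ := by rw [hz, mul_inv]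
  linear_combination -e2 - 1 / 2 * e3

lemma asym {x : ℂ} (hx : x ∈ Complex.slitPlane) :
    Tendsto (fun N => G x N + A x N - M x N) atTop (𝓝 0) := by
  have hx0 := Complex.slitPlane_ne_zero hx
  have h := ((((asym_c hx).const_mul (-x⁻¹)).sub asym_d).sub ((asym_b hx).const_mul (1 / 2 * x⁻¹))).sub
    (asym_e.const_mul (1 / 2 * x⁻¹))
  simp only [mul_zero, sub_zero] at h
  refine h.congr fun N => ?_
  rw [G_add_A, sum_a hx, M]
  push_cast
  field_simp
  ring

lemma A_symm {x : ℂ} (hx : x ≠ 0) (N : ℕ) : x⁻¹ * A x⁻¹ N = A x N := by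
  unfold A
  rw [Finset.sum_comm, Finset.mul_sum]
  refine Finset.sum_congr rfl fun n _ => ?_
  rw [Finset.mul_sum]
  refine Finset.sum_congr rfl fun m _ => ?_
  rw [← mul_inv]
  congr 1
  field_simp
  ring

lemma inv_mem {x : ℂ} (hx : x ∈ Complex.slitPlane) : x⁻¹ ∈ Complex.slitPlane := by
  rw [Complex.mem_slitPlane_iff_arg] at hx ⊢
  refine ⟨?_, inv_ne_zero hx.2⟩
  rw [Complex.arg_inv, if_neg hx.1]
  intro h
  linarith [Complex.neg_pi_lt_arg x]

lemma log_one_add_inv {x : ℂ} (hx : x ∈ Complex.slitPlane) :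
    Complex.log (1 + x⁻¹) = Complex.log (1 + x) - Complex.log x := by
  have hx0 := Complex.slitPlane_ne_zero hx
  have h1 := Complex.slitPlane_arg_ne_pi hx
  have e : 1 + x⁻¹ = (1 + x) * x⁻¹ := by field_simp; ring
  rw [e, Complex.log_mul (Complex.slitPlane_ne_zero (one_add_mem hx)) (inv_ne_zero hx0) ?_,
    Complex.log_inv x h1, sub_eq_add_neg]
  rw [Complex.arg_inv, if_neg h1]
  have im1 : (1 + x).im = x.im := by simp
  rcases lt_trichotomy x.im 0 with h | h | h
  · have a1 := Complex.arg_neg_iff.2 h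
    have a2 := Complex.arg_neg_iff.2 (im1 ▸ h)
    constructor <;> linarith [Complex.neg_pi_lt_arg x, Complex.neg_pi_lt_arg (1 + x), Real.pi_pos]
  · have hr : 0 < x.re := by
      rcases hx with hh | hh
      · exact hh
      · exact absurd h hh
    have a1 : x.arg = 0 := Complex.arg_eq_zero_iff.2 ⟨hr.le, h⟩
    have a2 : (1 + x).arg = 0 := Complex.arg_eq_zero_iff.2 ⟨by simp; linarith, by simpa using h⟩
    rw [a1, a2]
    constructor <;> linarith [Real.pi_pos]
  · have a1 := Complex.arg_nonneg_iff.2 h.le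
    have a2 := Complex.arg_nonneg_iff.2 (im1 ▸ h.le)
    constructor
    · have := (Complex.arg_le_pi x).lt_of_ne h1
      linarith
    · linarith [Complex.arg_le_pi (1 + x)]

lemma log_two_pi_div {x : ℂ} (hx : x ∈ Complex.slitPlane) :
    Complex.log (2 * Real.pi / x) = ((Real.log (2 * Real.pi) : ℝ) : ℂ) - Complex.log x := by
  have := Complex.log_ofReal_mul (r := 2 * Real.pi) (by positivity)
    (inv_ne_zero (Complex.slitPlane_ne_zero hx))
  rw [Complex.log_inv x (Complex.slitPlane_arg_ne_pi hx)] at this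
  push_cast at this
  rw [div_eq_mul_inv, this]
  push_cast
  ring

end Ram

theorem ramanujan_two_term_relation (x : ℂ) (hx : x ∈ Complex.slitPlane) :
    F1 x = (1 / x) * F1 (1 / x) := by
  have hx0 := Complex.slitPlane_ne_zero hx
  have hy := Ram.inv_mem hx
  have h1 := (Ram.asym hx).sub ((Ram.asym hy).const_mul x⁻¹)
  have h2 := (Ram.G_tendsto hx).sub ((Ram.G_tendsto hy).const_mul x⁻¹)
  have h3 := h2.sub h1
  have h4 : S1 x - x⁻¹ * S1 x⁻¹ - (0 - x⁻¹ * 0) =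
      1 / 2 * ((Real.eulerMascheroniConstant : ℂ)
        - (((Real.log (2 * Real.pi) : ℝ) : ℂ) - Complex.log x))
      - x⁻¹ * (1 / 2 * ((Real.eulerMascheroniConstant : ℂ)
        - (((Real.log (2 * Real.pi) : ℝ) : ℂ) + Complex.log x))) := by
    refine tendsto_nhds_unique h3 (tendsto_const_nhds.congr fun N => ?_)
    have hA := Ram.A_symm hx0 N
    have hM : Ram.M x N - x⁻¹ * Ram.M x⁻¹ N = 1 / 2 * ((Real.eulerMascheroniConstant : ℂ)
        - (((Real.log (2 * Real.pi) : ℝ) : ℂ) - Complex.log x))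
      - x⁻¹ * (1 / 2 * ((Real.eulerMascheroniConstant : ℂ)
        - (((Real.log (2 * Real.pi) : ℝ) : ℂ) + Complex.log x))) := by
      unfold Ram.M
      rw [Ram.log_one_add_inv hx, Complex.log_inv x (Complex.slitPlane_arg_ne_pi hx)]
      field_simp
      ring
    linear_combination -hM - hA
  unfold F1
  rw [one_div x, Ram.log_two_pi_div hx, Ram.log_two_pi_div hy,
    Complex.log_inv x (Complex.slitPlane_arg_ne_pi hx)]
  linear_combination h4
end

section
/- For x in ℂ \ (-∞, 0], the function 𝓢₁ satisfies the three-term relation 𝓢₁(x) - 𝓢₁(x+1) - (1/(x+1))·𝓢₁(x/(x+1)) = -(1/(2(x+1)))·(γ - log(2π) - x·log(x/(x+1))). -/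
open MeasureTheory Set

namespace ThreeTerm

open Filter Topology Complex

/-- summand of the series. -/
noncomputable def ph (z : ℂ) : ℂ := digammaC z - log z + 1 / (2 * z)

/-- trapezoid error for `1/w`. -/
noncomputable def tz (w : ℂ) : ℂ := (1 / 2) * (1 / w + 1 / (w + 1)) - (log (w + 1) - log w)

/-- trapezoid error for `log w`. -/
noncomputable def sz (w : ℂ) : ℂ :=
  (1 / 2) * (log w + log (w + 1)) - ((w + 1) * log (w + 1) - w * log w - 1)

lemma slit_comb {x : ℂ} (hx : x ∈ slitPlane) {a b : ℝ} (ha : 0 ≤ a) (hb : 0 ≤ b) (hab : 0 < a + b) :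
    (a : ℂ) * x + b ∈ slitPlane := by
  rw [mem_slitPlane_iff] at *
  simp only [add_re, mul_re, ofReal_re, ofReal_im, zero_mul, sub_zero, add_im, mul_im, add_zero]
  rcases hx with h | h
  · left
    rcases ha.eq_or_lt with h0 | h0
    · subst h0; simpa using hab
    · positivity
  · rcases ha.eq_or_lt with h0 | h0
    · subst h0; left; simpa using hab
    · right; positivity

lemma slit_add {x : ℂ} (hx : x ∈ slitPlane) {b : ℝ} (hb : 0 ≤ b) : x + b ∈ slitPlane := by
  simpa using slit_comb hx zero_le_one hb (by positivity)

lemma slit_add_one {x : ℂ} (hx : x ∈ slitPlane) : x + 1 ∈ slitPlane := by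
  simpa using slit_add hx zero_le_one

lemma slit_add_nat {x : ℂ} (hx : x ∈ slitPlane) (n : ℕ) : x + n ∈ slitPlane := by
  simpa using slit_add hx (n.cast_nonneg)

lemma slit_mul {x : ℂ} (hx : x ∈ slitPlane) (n : ℕ) : ((n : ℂ) + 1) * x ∈ slitPlane := by
  simpa using slit_comb hx (a := n + 1) (b := 0) (by positivity) le_rfl (by positivity)

lemma exists_c {x : ℂ} (hx : x ∈ slitPlane) :
    ∃ c : ℝ, 0 < c ∧ ∀ a b : ℝ, 0 ≤ a → 0 ≤ b → c * (a + b) ≤ ‖(a : ℂ) * x + b‖ := by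
  obtain ⟨s, hs, hmin⟩ := (isCompact_Icc (a := (0:ℝ)) (b := 1)).exists_isMinOn
    (nonempty_Icc.2 zero_le_one)
    (f := fun s : ℝ => ‖(s : ℂ) * x + ((1 - s : ℝ) : ℂ)‖) (by fun_prop)
  refine ⟨_, norm_pos_iff.2 (slitPlane_ne_zero (slit_comb hx hs.1 (b := 1 - s)
    (by linarith [hs.2]) (by linarith))), fun a b ha hb => ?_⟩
  rcases (add_nonneg ha hb).eq_or_lt with h | h
  · rw [← h]; simp
  · have h1 : a / (a + b) ∈ Icc (0:ℝ) 1 := ⟨by positivity, by rw [div_le_one h]; linarith⟩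
    have h2 := hmin h1
    simp only [mem_ofPred_eq] at h2
    have h3 : (a : ℂ) * x + b = ((a + b : ℝ) : ℂ) *
        (((a / (a + b) : ℝ) : ℂ) * x + ((1 - a / (a + b) : ℝ) : ℂ)) := by
      have : ((a : ℂ) + b) ≠ 0 := by exact_mod_cast h.ne'
      push_cast
      field_simp
      ring
    rw [h3, norm_mul, norm_real, Real.norm_of_nonneg h.le, mul_comm]
    gcongr

lemma tz_bound {w : ℂ} (hw : w ∈ slitPlane) {δ : ℝ} (hδ : 0 < δ)
    (h : ∀ u : ℝ, 0 ≤ u → δ ≤ ‖w + u‖) : ‖tz w‖ ≤ 1 / δ ^ 3 := by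
  have hs : ∀ u : ℝ, 0 ≤ u → w + u ∈ slitPlane := fun u hu => slit_add hw hu
  have hw0 : w ≠ 0 := slitPlane_ne_zero hw
  have key := norm_image_sub_le_of_norm_deriv_le_segment_01'
    (f := fun u : ℝ => ((u : ℂ) / 2) * (1 / w + 1 / (w + u)) - (log (w + u) - log w))
    (f' := fun u : ℝ => (u : ℂ) ^ 2 / (2 * w * (w + u) ^ 2)) (C := 1 / δ ^ 3) ?_ ?_
  · simpa [tz] using key
  · intro u hu
    have h0 : w + (u : ℂ) ≠ 0 := slitPlane_ne_zero (hs u hu.1)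
    have hd : HasDerivAt (fun z : ℂ => (z / 2) * (1 / w + 1 / (w + z)) - (log (w + z) - log w))
        ((u : ℂ) ^ 2 / (2 * w * (w + u) ^ 2)) (u : ℂ) := by
      have e1 : HasDerivAt (fun z : ℂ => w + z) 1 (u : ℂ) := (hasDerivAt_id _).const_add w
      have e2 := e1.clog (hs u hu.1)
      have e3 := (e1.fun_inv h0).const_add (1 / w)
      have e4 := (((hasDerivAt_id (u : ℂ)).div_const 2).fun_mul e3).fun_sub (e2.sub_const (log w))
      simp only [← one_div, id] at e4
      refine e4.congr_deriv ?_
      field_simp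
      ring
    exact hd.comp_ofReal.hasDerivWithinAt
  · intro u hu
    have h1 := h 0 le_rfl
    have h2 := h u hu.1
    simp only [ofReal_zero, add_zero] at h1
    rw [norm_div, norm_mul, norm_mul, norm_pow, norm_pow, norm_real, Real.norm_of_nonneg hu.1]
    have : δ ^ 3 = δ * δ ^ 2 := by ring
    rw [this]
    apply div_le_div₀ zero_le_one (pow_le_one₀ hu.1 hu.2.le) (by positivity)
    have : ‖(2:ℂ)‖ = 2 := by simp
    rw [this]
    gcongr
    linarith

lemma sz_bound {w : ℂ} (hw : w ∈ slitPlane) {δ : ℝ} (hδ : 0 < δ)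
    (h : ∀ u : ℝ, 0 ≤ u → δ ≤ ‖w + u‖) : ‖sz w‖ ≤ 1 / δ ^ 2 := by
  have hs : ∀ u : ℝ, 0 ≤ u → w + u ∈ slitPlane := fun u hu => slit_add hw hu
  have hw0 : w ≠ 0 := slitPlane_ne_zero hw
  have hlog : ∀ u : ℝ, HasDerivAt (fun z : ℂ => w + z) 1 (u : ℂ) :=
    fun u => (hasDerivAt_id _).const_add w
  have key1 : ∀ v ∈ Icc (0:ℝ) 1,
      ‖(1 / 2) * (log w - log (w + v)) + (v : ℂ) / (2 * (w + v))‖ ≤ 1 / δ ^ 2 := by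
    intro v hv
    have := norm_image_sub_le_of_norm_deriv_le_segment' (a := 0) (b := 1)
      (f := fun u : ℝ => (1 / 2) * (log w - log (w + u)) + (u : ℂ) / (2 * (w + u)))
      (f' := fun u : ℝ => -(u : ℂ) / (2 * (w + u) ^ 2)) (C := 1 / δ ^ 2) ?_ ?_ v hv
    · simp only [ofReal_zero, add_zero, sub_self, mul_zero, zero_div, sub_zero] at this
      refine this.trans (mul_le_of_le_one_right (by positivity) hv.2)
    · intro u hu
      have h0 : w + (u : ℂ) ≠ 0 := slitPlane_ne_zero (hs u hu.1)
      have hd : HasDerivAt (fun z : ℂ => (1 / 2) * (log w - log (w + z)) + z / (2 * (w + z)))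
          (-(u : ℂ) / (2 * (w + u) ^ 2)) (u : ℂ) := by
        have e2 := (((hlog u).clog (hs u hu.1)).const_sub (log w)).const_mul (1 / 2)
        have e3 := (hasDerivAt_id (u : ℂ)).fun_div ((hlog u).const_mul 2) (by simpa using h0)
        refine (e2.fun_add e3).congr_deriv ?_
        simp only [id]
        field_simp
        ring
      exact hd.comp_ofReal.hasDerivWithinAt
    · intro u hu
      have h2 := h u hu.1
      rw [norm_div, norm_neg, norm_mul, norm_pow, norm_real, Real.norm_of_nonneg hu.1]
      apply div_le_div₀ zero_le_one hu.2.le (by positivity)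
      have : ‖(2:ℂ)‖ = 2 := by simp
      rw [this]
      have : δ ^ 2 ≤ ‖w + u‖ ^ 2 := by gcongr
      nlinarith [sq_nonneg ‖w + u‖]
  have key := norm_image_sub_le_of_norm_deriv_le_segment_01'
    (f := fun u : ℝ => ((u : ℂ) / 2) * (log w + log (w + u)) -
      ((w + u) * log (w + u) - w * log w - u))
    (f' := fun u : ℝ => (1 / 2) * (log w - log (w + u)) + (u : ℂ) / (2 * (w + u)))
    (C := 1 / δ ^ 2) ?_ (fun u hu => key1 u ⟨hu.1, hu.2.le⟩)
  · simpa [sz] using key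
  · intro u hu
    have h0 : w + (u : ℂ) ≠ 0 := slitPlane_ne_zero (hs u hu.1)
    have hd : HasDerivAt (fun z : ℂ => (z / 2) * (log w + log (w + z)) -
      ((w + z) * log (w + z) - w * log w - z))
        ((1 / 2) * (log w - log (w + u)) + (u : ℂ) / (2 * (w + u))) (u : ℂ) := by
      have e2 := (hlog u).clog (hs u hu.1)
      have e3 := ((hasDerivAt_id (u : ℂ)).div_const 2).fun_mul (e2.const_add (log w))
      have e4 := (((hlog u).fun_mul e2).sub_const (w * log w)).fun_sub (hasDerivAt_id (u : ℂ))
      refine (e3.fun_sub e4).congr_deriv ?_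
      simp only [id]
      field_simp
      ring
    exact hd.comp_ofReal.hasDerivWithinAt

lemma log_mul_same {a b : ℂ} (h : (0 < a.im ∧ 0 < b.im ∧ 0 < (a * b).im) ∨
    (a.im < 0 ∧ b.im < 0 ∧ (a * b).im < 0) ∨ (a.im = 0 ∧ b.im = 0 ∧ 0 < a.re ∧ 0 < b.re)) :
    log (a * b) = log a + log b := by
  have ha : a ≠ 0 := by rintro rfl; simp at h
  have hb : b ≠ 0 := by rintro rfl; simp at h
  rw [log_mul_eq_add_log_iff ha hb]
  have him : (a * b).im = ‖a‖ * ‖b‖ * Real.sin (arg a + arg b) := by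
    rw [mul_im, Real.sin_add, ← norm_mul_cos_arg a, ← norm_mul_sin_arg a,
      ← norm_mul_cos_arg b, ← norm_mul_sin_arg b]
    ring
  have hp : 0 < ‖a‖ * ‖b‖ := by positivity
  have a1 := neg_pi_lt_arg a
  have a2 := arg_le_pi a
  have b1 := neg_pi_lt_arg b
  have b2 := arg_le_pi b
  rcases h with ⟨h1, h2, h3⟩ | ⟨h1, h2, h3⟩ | ⟨h1, h2, h3, h4⟩
  · rw [him] at h3
    have h4 := (mul_pos_iff_of_pos_left hp).1 h3
    have := arg_nonneg_iff.2 h1.le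
    have := arg_nonneg_iff.2 h2.le
    refine ⟨by linarith [Real.pi_pos], ?_⟩
    by_contra! hc
    have := Real.sin_nonneg_of_nonneg_of_le_pi (x := arg a + arg b - Real.pi) (by linarith)
      (by linarith)
    rw [Real.sin_sub_pi] at this
    linarith
  · rw [him] at h3
    have h4 : Real.sin (arg a + arg b) < 0 := by
      by_contra! hc
      have := mul_nonneg hp.le hc
      linarith
    have := arg_neg_iff.2 h1
    have := arg_neg_iff.2 h2
    refine ⟨?_, by linarith [Real.pi_pos]⟩
    by_contra! hc
    have := Real.sin_nonneg_of_nonneg_of_le_pi (x := arg a + arg b + 2 * Real.pi) (by linarith)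
      (by linarith)
    rw [Real.sin_add_two_pi] at this
    linarith
  · have e1 : arg a = 0 := arg_eq_zero_iff.2 ⟨h3.le, h1⟩
    have e2 : arg b = 0 := arg_eq_zero_iff.2 ⟨h4.le, h2⟩
    rw [e1, e2]
    constructor <;> linarith [Real.pi_pos]

/-- `log (v (x+1)) = log v + log (x+1)` for `v` in the cone spanned by `1` and `x / (x+1)`. -/
lemma log_cone {x : ℂ} (hx : x ∈ slitPlane) {a b : ℝ} (ha : 0 < a) (hb : 0 ≤ b) :
    log ((a * (x / (x + 1)) + b) * (x + 1)) = log (a * (x / (x + 1)) + b) + log (x + 1) := by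
  have hx1 : x + 1 ≠ 0 := slitPlane_ne_zero (slit_add_one hx)
  have hn : 0 < normSq (x + 1) := normSq_pos.2 hx1
  have him : ((a : ℂ) * (x / (x + 1)) + b).im = a * x.im / normSq (x + 1) := by
    simp [div_im]
    field_simp
    ring
  have him2 : (((a : ℂ) * (x / (x + 1)) + b) * (x + 1)).im = (a + b) * x.im := by
    have : ((a : ℂ) * (x / (x + 1)) + b) * (x + 1) = a * x + b * (x + 1) := by
      field_simp
    rw [this]; simp; ring
  have him3 : (x + 1).im = x.im := by simp
  apply log_mul_same
  rw [him, him2, him3]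
  rcases lt_trichotomy x.im 0 with h | h | h
  · right; left
    refine ⟨div_neg_of_neg_of_pos (by nlinarith) hn, h, by nlinarith⟩
  · right; right
    have hre : 0 < x.re := by
      rcases mem_slitPlane_iff.1 hx with h' | h'
      · exact h'
      · exact absurd h h'
    refine ⟨by simp [h], h, ?_, by simp; linarith⟩
    simp [div_re, h]
    positivity
  · left
    exact ⟨by positivity, h, by positivity⟩

lemma slit_y {x : ℂ} (hx : x ∈ slitPlane) : x / (x + 1) ∈ slitPlane := by
  have hx1 : x + 1 ≠ 0 := slitPlane_ne_zero (slit_add_one hx)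
  have hn : 0 < normSq (x + 1) := normSq_pos.2 hx1
  rw [mem_slitPlane_iff]
  have him : (x / (x + 1)).im = x.im / normSq (x + 1) := by
    simp [div_im]
    field_simp
    ring
  by_cases h : x.im = 0
  · have hre : 0 < x.re := by
      rcases mem_slitPlane_iff.1 hx with h' | h'
      · exact h'
      · exact absurd h h'
    left
    simp [div_re, h]
    positivity
  · right; rw [him]; positivity

lemma digammaC_eq (z : ℂ) : digammaC z = digamma z := rfl

lemma slit_ne_neg_nat {z : ℂ} (hz : z ∈ slitPlane) (m : ℕ) : z ≠ -m := by
  intro h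
  exact slitPlane_ne_zero (slit_add_nat hz m) (by rw [h]; simp)

lemma ph_rec {z : ℂ} (hz : z ∈ slitPlane) : ph (z + 1) = ph z + tz z := by
  have h0 := slitPlane_ne_zero hz
  have h1 := slitPlane_ne_zero (slit_add_one hz)
  unfold ph tz
  rw [digammaC_eq, digammaC_eq, digamma_apply_add_one z (slit_ne_neg_nat hz)]
  field_simp
  ring

lemma ph_add_nat {z : ℂ} (hz : z ∈ slitPlane) (N : ℕ) :
    ph (z + N) = ph z + ∑ m ∈ Finset.range N, tz (z + m) := by
  induction N with
  | zero => simp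
  | succ N ih =>
    rw [Finset.sum_range_succ, ← add_assoc, ← ih, ← ph_rec (slit_add_nat hz N)]
    push_cast
    ring_nf

lemma tz_cone_bound {x : ℂ} (hx : x ∈ slitPlane) {c : ℝ} (hc : 0 < c)
    (h : ∀ a b : ℝ, 0 ≤ a → 0 ≤ b → c * (a + b) ≤ ‖(a : ℂ) * x + b‖) {a b : ℝ}
    (ha : 0 ≤ a) (hb : 0 ≤ b) (hab : 0 < a + b) :
    ‖tz (a * x + b)‖ ≤ 1 / (c * (a + b)) ^ 3 := by
  apply tz_bound (slit_comb hx ha hb hab) (by positivity)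
  intro u hu
  have := h a (b + u) ha (by positivity)
  refine le_trans ?_ (this.trans_eq ?_)
  · gcongr; linarith
  · push_cast; ring_nf

lemma summable_cube (C : ℝ) : Summable (fun m : ℕ => C / ((m : ℝ) + 1) ^ 3) := by
  have h := (Real.summable_one_div_nat_pow (p := 3)).2 (by norm_num)
  have h2 := ((summable_nat_add_iff 1).2 h).mul_left C
  refine h2.congr fun m => ?_
  push_cast
  ring

lemma differentiable_tsum : DifferentiableOn ℂ (fun z => ∑' m : ℕ, tz (z + m)) slitPlane := by
  intro z hz
  obtain ⟨c, hc, h⟩ := exists_c hz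
  set U : Set ℂ := Metric.ball z (c / 2) ∩ slitPlane with hU
  have hUo : IsOpen U := Metric.isOpen_ball.inter isOpen_slitPlane
  have hzU : z ∈ U := ⟨Metric.mem_ball_self (by positivity), hz⟩
  have hd : DifferentiableOn ℂ (fun z => ∑' m : ℕ, tz (z + m)) U := by
    apply differentiableOn_tsum_of_summable_norm (summable_cube (1 / (c / 2) ^ 3)) _ hUo
    · intro m w hw
      have hb : ∀ u : ℝ, 0 ≤ u → (c / 2) * (m + 1) ≤ ‖w + m + u‖ := by
        intro u hu
        have h1 := h 1 (m + u) zero_le_one (by positivity)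
        have h2 : ‖w - z‖ < c / 2 := by simpa [dist_eq_norm] using hw.1
        have h3 : ((1 : ℝ) : ℂ) * z + ((m + u : ℝ) : ℂ) = (w + m + u) - (w - z) := by
          push_cast; ring
        rw [h3] at h1
        have h4 := norm_sub_le (w + m + u) (w - z)
        have : 0 ≤ c * m := by positivity
        have : 0 ≤ c * u := by positivity
        nlinarith
      refine (tz_bound (slit_add_nat hw.2 m) (by positivity) hb).trans_eq ?_
      rw [mul_pow]
      field_simp
    · intro m w hw
      have h1 := slit_add_nat hw.2 m
      have h2 := slit_add_one h1
      have := slitPlane_ne_zero h1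
      have := slitPlane_ne_zero h2
      apply DifferentiableAt.differentiableWithinAt
      unfold tz
      fun_prop (disch := assumption)
  exact ((hd z hzU).differentiableAt (hUo.mem_nhds hzU)).differentiableWithinAt

lemma differentiable_ph : DifferentiableOn ℂ ph slitPlane := by
  have hG : DifferentiableOn ℂ Gamma slitPlane := fun z hz =>
    (differentiableAt_Gamma z (slit_ne_neg_nat hz)).differentiableWithinAt
  have hG' := hG.deriv isOpen_slitPlane
  have hd : DifferentiableOn ℂ digammaC slitPlane :=
    hG'.fun_div hG fun z hz => Gamma_ne_zero (slit_ne_neg_nat hz)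
  unfold ph
  refine (hd.sub ?_).add ?_
  · exact fun z hz => (differentiableAt_log hz).differentiableWithinAt
  · intro z hz
    have : 2 * z ≠ 0 := by simpa using slitPlane_ne_zero hz
    apply DifferentiableAt.differentiableWithinAt
    fun_prop (disch := assumption)

lemma digammaC_ofReal {r : ℝ} (hr : 0 < r) :
    digammaC r = ((deriv (Real.log ∘ Real.Gamma) r : ℝ) : ℂ) := by
  have hne : ∀ m : ℕ, r ≠ -m := fun m => ne_of_gt (by linarith [m.cast_nonneg (α := ℝ)])
  have hd := Real.differentiableAt_Gamma hne
  have h1 : deriv Gamma (r : ℂ) = ((deriv Real.Gamma r : ℝ) : ℂ) := by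
    have hc := (differentiableAt_Gamma (r : ℂ)
      (fun m => by exact_mod_cast hne m)).hasDerivAt.comp_ofReal
    have h2 := hd.hasDerivAt.ofReal_comp
    simp only [Gamma_ofReal] at hc
    exact hc.unique h2
  rw [Function.comp_def, deriv.log hd (Real.Gamma_pos_of_pos hr).ne', digammaC, h1, Gamma_ofReal]
  push_cast
  rfl

lemma deriv_log_Gamma_bounds {r : ℝ} (hr : 0 < r) :
    Real.log r ≤ deriv (Real.log ∘ Real.Gamma) (r + 1) ∧
      deriv (Real.log ∘ Real.Gamma) (r + 1) ≤ Real.log (r + 1) := by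
  set f := Real.log ∘ Real.Gamma with hf
  have hc : ConvexOn ℝ (Ioi 0) f := Real.convexOn_log_Gamma
  have h_rec (x : ℝ) (hx : 0 < x) : f (x + 1) = f x + Real.log x := by
    simp only [f, Function.comp_apply,
      Real.Gamma_add_one hx.ne', Real.log_mul hx.ne' (Real.Gamma_pos_of_pos hx).ne', add_comm]
  have hder {x : ℝ} (hx : 0 < x) : DifferentiableAt ℝ f x := by
    refine ((Real.differentiableAt_Gamma ?_).log (Real.Gamma_ne_zero ?_)) <;>
    exact fun m ↦ ne_of_gt (by linarith [m.cast_nonneg (α := ℝ)])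
  constructor
  · refine (le_of_eq ?_).trans <| hc.slope_le_deriv (mem_Ioi.mpr hr)
      (by positivity : _ < (_ : ℝ)) (by linarith) (hder <| by positivity)
    rw [slope_def_field, show r + 1 - r = (1 : ℝ) by ring, div_one, h_rec r hr,
      add_sub_cancel_left]
  · refine (hc.deriv_le_slope (by positivity : (0 : ℝ) < r + 1) (by positivity : (0 : ℝ) < r + 2)
        (by linarith) (hder <| by positivity)).trans (le_of_eq ?_)
    rw [slope_def_field, show r + 2 - (r + 1) = (1 : ℝ) by ring, div_one,
      show r + 2 = (r + 1) + (1 : ℝ) by ring, h_rec (r + 1) (by positivity), add_sub_cancel_left]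

lemma ph_real_tendsto {r : ℝ} (hr : 0 < r) :
    Tendsto (fun N : ℕ => ph ((r : ℂ) + (N + 1 : ℕ))) atTop (𝓝 0) := by
  have hinf : Tendsto (fun N : ℕ => r + N) atTop atTop :=
    tendsto_atTop_add_const_left _ _ tendsto_natCast_atTop_atTop
  have hlog : Tendsto (fun N : ℕ => Real.log (r + N) - Real.log (r + N + 1)) atTop (𝓝 0) := by
    have := (Real.tendsto_log_comp_add_sub_log 1).comp hinf
    simpa using this.neg
  have h1 : Tendsto (fun N : ℕ => deriv (Real.log ∘ Real.Gamma) (r + N + 1) -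
      Real.log (r + N + 1)) atTop (𝓝 0) := by
    refine tendsto_of_tendsto_of_tendsto_of_le_of_le hlog tendsto_const_nhds ?_ ?_
    · intro N
      have := (deriv_log_Gamma_bounds (r := r + N) (by positivity)).1
      dsimp only; linarith
    · intro N
      have := (deriv_log_Gamma_bounds (r := r + N) (by positivity)).2
      dsimp only; linarith
  have h2 : Tendsto (fun N : ℕ => 1 / (2 * (r + N + 1))) atTop (𝓝 0) := by
    have : Tendsto (fun N : ℕ => (2 * (r + N + 1))) atTop atTop :=
      (tendsto_atTop_add_const_right _ _ hinf).const_mul_atTop two_pos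
    exact this.inv_tendsto_atTop.congr fun N => by simp
  have h3 := (continuous_ofReal.tendsto _).comp (h1.add h2)
  simp only [add_zero, ofReal_zero] at h3
  refine h3.congr fun N => ?_
  have e : ((r : ℂ) + (N + 1 : ℕ)) = ((r + N + 1 : ℝ) : ℂ) := by push_cast; ring
  rw [ph, e, digammaC_ofReal (by positivity), ← ofReal_log (by positivity)]
  simp

lemma summable_tz_nat {z : ℂ} (hz : z ∈ slitPlane) : Summable (fun m : ℕ => tz (z + m)) := by
  obtain ⟨c, hc, h⟩ := exists_c hz
  refine Summable.of_norm_bounded (summable_cube (1 / c ^ 3)) fun m => ?_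
  have := tz_cone_bound hz hc h (a := 1) (b := m) zero_le_one (by positivity) (by positivity)
  simp only [ofReal_one, one_mul, ofReal_natCast] at this
  refine this.trans_eq ?_
  rw [mul_pow, add_comm (1 : ℝ)]
  field_simp

lemma ph_eq {z : ℂ} (hz : z ∈ slitPlane) : ph z = -∑' m : ℕ, tz (z + m) := by
  have han : AnalyticOnNhd ℂ ph slitPlane := differentiable_ph.analyticOnNhd isOpen_slitPlane
  have hbn : AnalyticOnNhd ℂ (fun z => -∑' m : ℕ, tz (z + m)) slitPlane :=
    (differentiable_tsum.neg).analyticOnNhd isOpen_slitPlane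
  have hreal : ∀ r : ℝ, 0 < r → ph r = -∑' m : ℕ, tz (r + m) := by
    intro r hr
    have hrs : (r : ℂ) ∈ slitPlane := ofReal_mem_slitPlane.2 hr
    have h1 := (summable_tz_nat hrs).hasSum.tendsto_sum_nat
    have h2 := (ph_real_tendsto hr)
    have h3 := (h1.comp (tendsto_add_atTop_nat 1)).const_add (ph r)
    have h4 := tendsto_nhds_unique h2 (h3.congr fun N => (ph_add_nat hrs (N + 1)).symm)
    linear_combination -h4
  refine han.eqOn_of_preconnected_of_frequently_eq hbn
    (starConvex_one_slitPlane.isPathConnected one_mem_slitPlane).isConnected.isPreconnected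
    one_mem_slitPlane ?_ hz
  have hr : ∃ᶠ r : ℝ in 𝓝[≠] 1, ph r = -∑' m : ℕ, tz (r + m) := by
    apply Eventually.frequently
    filter_upwards [mem_nhdsWithin_of_mem_nhds (lt_mem_nhds (zero_lt_one' ℝ))] with r hr
    exact hreal r hr
  have ht : Tendsto (fun r : ℝ => (r : ℂ)) (𝓝[≠] 1) (𝓝[≠] 1) := by
    refine tendsto_nhdsWithin_iff.2 ⟨?_, ?_⟩
    · simpa using (continuous_ofReal.tendsto 1).mono_left nhdsWithin_le_nhds
    · filter_upwards [self_mem_nhdsWithin] with r hr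
      simpa using hr
  exact ht.frequently hr

lemma summable_pair {x : ℂ} (hx : x ∈ slitPlane) :
    Summable (fun p : ℕ × ℕ => tz (((p.1 : ℂ) + 1) * x + p.2)) := by
  obtain ⟨c, hc, h⟩ := exists_c hx
  have hs : Summable (fun n : ℕ => 1 / ((n : ℝ) + 1) ^ (3 / 2 : ℝ)) := by
    have h1 := (Real.summable_one_div_nat_rpow (p := 3 / 2)).2 (by norm_num)
    have h2 := (summable_nat_add_iff 1).2 h1
    simpa using h2
  have hs2 := ((hs.mul_of_nonneg hs (fun n => by positivity) (fun n => by positivity))).mul_left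
    (1 / c ^ 3)
  refine Summable.of_norm_bounded hs2 fun p => ?_
  obtain ⟨n, m⟩ := p
  have := tz_cone_bound hx hc h (a := n + 1) (b := m) (by positivity) (by positivity)
    (by positivity)
  push_cast at this
  refine this.trans ?_
  dsimp only
  rw [mul_pow, ← one_div_mul_one_div]
  apply mul_le_mul_of_nonneg_left _ (by positivity)
  rw [one_div_mul_one_div, ← Real.mul_rpow (by positivity) (by positivity)]
  apply one_div_le_one_div_of_le (by positivity)
  have h3 : ((n : ℝ) + 1 + m) ^ 3 = (((n : ℝ) + 1 + m) ^ 2) ^ (3 / 2 : ℝ) := by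
    rw [← Real.rpow_natCast, ← Real.rpow_natCast, ← Real.rpow_mul (by positivity)]
    norm_num
  rw [h3]
  apply Real.rpow_le_rpow (by positivity) _ (by norm_num)
  have : (0:ℝ) ≤ n := by positivity
  have : (0:ℝ) ≤ m := by positivity
  nlinarith

lemma summable_ph {x : ℂ} (hx : x ∈ slitPlane) :
    Summable (fun n : ℕ => ph (((n : ℂ) + 1) * x)) := by
  refine ((summable_pair hx).prod.neg).congr fun n => ?_
  rw [ph_eq (slit_mul hx n)]

lemma S1_eq (x : ℂ) : S1 x = ∑' n : ℕ, ph (((n : ℂ) + 1) * x) := by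
  unfold S1 ph
  simp only [mul_assoc]

lemma hasSum_triangle {y : ℂ} (hy : y ∈ slitPlane) :
    HasSum (fun n : ℕ => ∑ m ∈ Finset.range (n + 1), tz ((((n - m : ℕ) : ℂ) + 1) * y + m))
      (-S1 y) := by
  have hs := summable_pair hy
  have h1 : ∑' p : ℕ × ℕ, tz (((p.1 : ℂ) + 1) * y + p.2) = -S1 y := by
    rw [S1_eq, hs.tsum_prod, ← tsum_neg]
    refine tsum_congr fun n => ?_
    rw [ph_eq (slit_mul hy n), neg_neg]
  have h2 := hs.hasSum
  rw [h1, ← Finset.HasAntidiagonal.sigmaAntidiagonalEquivProd.hasSum_iff] at h2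
  have h3 := h2.sigma (fun n => hasSum_fintype _)
  refine h3.congr_fun fun n => ?_
  have h4 : ∑ m ∈ Finset.range (n + 1), tz ((((n - m : ℕ) : ℂ) + 1) * y + m) =
      ∑ p ∈ Finset.HasAntidiagonal.antidiagonal n, tz (((p.1 : ℂ) + 1) * y + p.2) := by
    rw [← Finset.Nat.sum_antidiagonal_swap,
      ← Finset.Nat.sum_antidiagonal_eq_sum_range_succ
        (fun m k : ℕ => tz (((k : ℂ) + 1) * y + m))]
    rfl
  rw [h4]
  exact (Finset.sum_coe_sort (Finset.HasAntidiagonal.antidiagonal n)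
    (fun p : ℕ × ℕ => tz (((p.1 : ℂ) + 1) * y + p.2))).symm

lemma tz_scaled {x : ℂ} (hx : x ∈ slitPlane) {n m : ℕ} (h : m ≤ n) :
    (1 / (x + 1)) * tz ((((n - m : ℕ) : ℂ) + 1) * (x / (x + 1)) + m) =
    (1 / 2) * (1 / (((n : ℂ) + 1) * x + m) + 1 / (((n : ℂ) + 2) * x + (m + 1))) -
      (1 / (x + 1)) * (log (((n : ℂ) + 2) * x + (m + 1)) - log (((n : ℂ) + 1) * x + m)) := by
  have hx1 : x + 1 ≠ 0 := slitPlane_ne_zero (slit_add_one hx)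
  set v := (((n - m : ℕ) : ℂ) + 1) * (x / (x + 1)) + m with hv
  have hvs : v ∈ slitPlane := by
    have := slit_comb (slit_y hx) (a := (n - m : ℕ) + 1) (b := m) (by positivity) (by positivity)
      (by positivity)
    push_cast at this
    exact this
  have hv0 := slitPlane_ne_zero hvs
  have hv1 := slitPlane_ne_zero (slit_add_one hvs)
  have e1 : ((n : ℂ) + 1) * x + m = v * (x + 1) := by
    rw [hv, Nat.cast_sub h]; field_simp; ring
  have e2 : ((n : ℂ) + 2) * x + (m + 1) = (v + 1) * (x + 1) := by
    linear_combination e1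
  have l1 : log (v * (x + 1)) = log v + log (x + 1) := by
    have := log_cone hx (a := (n - m : ℕ) + 1) (b := m) (by positivity) (by positivity)
    push_cast at this
    exact this
  have l2 : log ((v + 1) * (x + 1)) = log (v + 1) + log (x + 1) := by
    have := log_cone hx (a := (n - m : ℕ) + 1) (b := m + 1) (by positivity) (by positivity)
    push_cast at this
    rw [← add_assoc] at this
    exact this
  rw [e1, e2, l1, l2, tz]
  field_simp
  ring

/-- closed form of the partial sums. -/
noncomputable def Q (x : ℂ) (N : ℕ) : ℂ :=
  (1 / 2) * ((∑ k ∈ Finset.range N, 1 / ((k : ℂ) + 1)) / (x + 1) -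
      ∑ j ∈ Finset.range N, 1 / (((N : ℂ) + 1) * x + (j + 1))) +
    N * (log x - log (x + 1)) +
    (1 / (x + 1)) * (∑ j ∈ Finset.range N, log (((N : ℂ) + 1) * x + (j + 1)) -
      ∑ j ∈ Finset.range N, ((Real.log (j + 1) : ℝ) : ℂ) - N * log x)

lemma log_nat_mul {z : ℂ} (hz : z ∈ slitPlane) (n : ℕ) :
    log (((n : ℂ) + 1) * z) = ((Real.log (n + 1) : ℝ) : ℂ) + log z := by
  have := log_ofReal_mul (r := n + 1) (by positivity) (slitPlane_ne_zero hz)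
  rw [← this]; push_cast; rfl

lemma Q_eq {x : ℂ} (hx : x ∈ slitPlane) (N : ℕ) :
    ∑ n ∈ Finset.range N, ∑ m ∈ Finset.range (n + 1), (tz (((n : ℂ) + 1) * x + m) -
      (1 / (x + 1)) * tz ((((n - m : ℕ) : ℂ) + 1) * (x / (x + 1)) + m)) = Q x N := by
  have hx1 : x + 1 ≠ 0 := slitPlane_ne_zero (slit_add_one hx)
  induction N with
  | zero => simp [Q]
  | succ N ih =>
    rw [Finset.sum_range_succ, ih]
    have hN : (N : ℂ) + 1 ≠ 0 := by exact_mod_cast N.succ_ne_zero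
    have e1 : ∀ m ∈ Finset.range (N + 1), (tz (((N : ℂ) + 1) * x + m) -
        (1 / (x + 1)) * tz ((((N - m : ℕ) : ℂ) + 1) * (x / (x + 1)) + m)) =
        (1 / 2) * (1 / (((N : ℂ) + 1) * x + (m + 1)) - 1 / (((N : ℂ) + 2) * x + (m + 1))) -
        (log (((N : ℂ) + 1) * x + ((m + 1 : ℕ) : ℂ)) - log (((N : ℂ) + 1) * x + m)) +
        (1 / (x + 1)) * (log (((N : ℂ) + 2) * x + (m + 1)) - log (((N : ℂ) + 1) * x + m)) := by
      intro m hm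
      rw [tz_scaled hx (Nat.lt_succ_iff.1 (Finset.mem_range.1 hm)), tz]
      push_cast
      rw [add_assoc (((N : ℂ) + 1) * x)]
      ring
    rw [Finset.sum_congr rfl e1]
    simp only [Finset.sum_add_distrib, Finset.sum_sub_distrib, ← Finset.mul_sum]
    have e2 := Finset.sum_range_sub (fun m : ℕ => log (((N : ℂ) + 1) * x + m)) (N + 1)
    rw [Finset.sum_sub_distrib] at e2
    rw [e2]
    have e3 : log (((N : ℂ) + 1) * x + ((N + 1 : ℕ) : ℂ)) =
        ((Real.log (N + 1) : ℝ) : ℂ) + log (x + 1) := by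
      rw [← log_nat_mul (slit_add_one hx)]; push_cast; ring_nf
    have e4 : log (((N : ℂ) + 1) * x + ((0 : ℕ) : ℂ)) = ((Real.log (N + 1) : ℝ) : ℂ) + log x := by
      rw [← log_nat_mul hx]; simp
    have e5 : 1 / (((N : ℂ) + 1) * x + (N + 1)) = 1 / ((N : ℂ) + 1) / (x + 1) := by
      rw [show ((N : ℂ) + 1) * x + (N + 1) = (N + 1) * (x + 1) by ring, div_div]
    rw [Finset.sum_range_succ (fun m : ℕ => 1 / (((N : ℂ) + 1) * x + (m + 1))),
      Finset.sum_range_succ' (fun m : ℕ => log (((N : ℂ) + 1) * x + m)), e3, e4, e5]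
    unfold Q
    rw [Finset.sum_range_succ (fun k : ℕ => 1 / ((k : ℂ) + 1)),
      Finset.sum_range_succ (fun j : ℕ => ((Real.log (j + 1) : ℝ) : ℂ))]
    push_cast
    rw [show (N : ℂ) + 1 + 1 = N + 2 by ring]
    ring

lemma tendsto_partial {x : ℂ} (hx : x ∈ slitPlane) :
    Tendsto (Q x) atTop (𝓝 (-(S1 x - S1 (x + 1) - (1 / (x + 1)) * S1 (x / (x + 1))))) := by
  have hx1 := slit_add_one hx
  have h1 : HasSum (fun n : ℕ => ∑ m ∈ Finset.range (n + 1), tz (((n : ℂ) + 1) * x + m))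
      (S1 (x + 1) - S1 x) := by
    rw [S1_eq, S1_eq]
    refine ((summable_ph hx1).hasSum.sub (summable_ph hx).hasSum).congr_fun fun n => ?_
    have := ph_add_nat (slit_mul hx n) (n + 1)
    rw [show ((n : ℂ) + 1) * (x + 1) = (n + 1) * x + ((n + 1 : ℕ) : ℂ) by push_cast; ring, this]
    ring
  have h2 := (hasSum_triangle (slit_y hx)).mul_left (1 / (x + 1))
  have h3 := (h1.sub h2).tendsto_sum_nat
  have e : S1 (x + 1) - S1 x - 1 / (x + 1) * -S1 (x / (x + 1)) =
      -(S1 x - S1 (x + 1) - (1 / (x + 1)) * S1 (x / (x + 1))) := by ring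
  rw [e] at h3
  refine h3.congr fun N => ?_
  rw [← Q_eq hx]
  refine Finset.sum_congr rfl fun n _ => ?_
  rw [Finset.sum_sub_distrib, Finset.mul_sum]

lemma sum_tz {z : ℂ} (hz : z ∈ slitPlane) (N : ℕ) :
    ∑ m ∈ Finset.range N, tz (z + m) = ∑ m ∈ Finset.range N, 1 / (z + m) - 1 / (2 * z)
      + 1 / (2 * (z + N)) - log (z + N) + log z := by
  induction N with
  | zero => simp
  | succ N ih =>
    have h1 := slitPlane_ne_zero (slit_add_nat hz N)
    have h2 := slitPlane_ne_zero (slit_add_nat hz (N + 1))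
    rw [Finset.sum_range_succ, ih, Finset.sum_range_succ, tz]
    push_cast at *
    rw [← add_assoc] at *
    field_simp
    ring

lemma sum_sz (z : ℂ) (N : ℕ) :
    ∑ m ∈ Finset.range N, sz (z + m) = ∑ m ∈ Finset.range N, log (z + m)
      + (1 / 2) * (log (z + N) - log z) - ((z + N) * log (z + N) - z * log z - N) := by
  induction N with
  | zero => simp
  | succ N ih =>
    rw [Finset.sum_range_succ, ih, Finset.sum_range_succ, sz]
    push_cast
    rw [← add_assoc]
    ring

lemma tendsto_inv_mul {z : ℂ} (c : ℂ) :
    Tendsto (fun N : ℕ => 1 / (c * (((N : ℂ) + 1) * z))) atTop (𝓝 0) := by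
  have h := (tendsto_one_div_add_atTop_nhds_zero_nat (𝕜 := ℂ)).mul_const (1 / (c * z))
  rw [zero_mul] at h
  refine h.congr fun N => ?_
  rw [one_div_mul_one_div]
  ring_nf

lemma tendsto_E1 {x : ℂ} (hx : x ∈ slitPlane) :
    Tendsto (fun N : ℕ => ∑ j ∈ Finset.range N, 1 / (((N : ℂ) + 1) * x + (j + 1))) atTop
      (𝓝 (log (x + 1) - log x)) := by
  have hx1 := slit_add_one hx
  have h := ((((summable_ph hx1).tendsto_atTop_zero.sub (summable_ph hx).tendsto_atTop_zero).sub
    (tendsto_inv_mul (z := x) 2)).sub (tendsto_inv_mul (z := x + 1) 2)).add_const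
      (log (x + 1) - log x)
  simp only [sub_zero, zero_add] at h
  refine h.congr fun N => ?_
  have hz := slit_mul hx N
  have hz0 := slitPlane_ne_zero hz
  have a1 := ph_add_nat hz (N + 1)
  rw [sum_tz hz, Finset.sum_range_succ',
    show ((N : ℂ) + 1) * x + ((N + 1 : ℕ) : ℂ) = (N + 1) * (x + 1) by push_cast; ring,
    log_nat_mul hx, log_nat_mul hx1] at a1
  rw [a1]
  push_cast
  rw [add_zero]
  generalize ((N : ℂ) + 1) * x = z at *
  field_simp
  ring

lemma tendsto_err {x : ℂ} (hx : x ∈ slitPlane) :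
    Tendsto (fun N : ℕ => ∑ m ∈ Finset.range (N + 1), sz (((N : ℂ) + 1) * x + m)) atTop (𝓝 0) := by
  obtain ⟨c, hc, h⟩ := exists_c hx
  have h0 := (tendsto_one_div_add_atTop_nhds_zero_nat (𝕜 := ℝ)).const_mul (1 / c ^ 2)
  rw [mul_zero] at h0
  refine squeeze_zero_norm (fun N => ?_) h0
  have hb : ∀ m ∈ Finset.range (N + 1),
      ‖sz (((N : ℂ) + 1) * x + m)‖ ≤ 1 / (c * (N + 1)) ^ 2 := by
    intro m _
    apply sz_bound (slit_add_nat (slit_mul hx N) m) (by positivity)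
    intro u hu
    have := h (N + 1) (m + u) (by positivity) (by positivity)
    refine le_trans ?_ (this.trans_eq ?_)
    · refine mul_le_mul_of_nonneg_left ?_ hc.le
      linarith [m.cast_nonneg (α := ℝ)]
    · push_cast; ring_nf
  refine (norm_sum_le_of_le _ hb).trans_eq ?_
  rw [Finset.sum_const, Finset.card_range, nsmul_eq_mul]
  push_cast
  field_simp

lemma tendsto_st : Tendsto (fun N : ℕ => ∑ j ∈ Finset.range N, Real.log (j + 1) + Real.log (N + 1)
      - (N + 1) * Real.log (N + 1) + (N + 1) - (1 / 2) * Real.log (N + 1)) atTop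
    (𝓝 ((1 / 2) * Real.log (2 * Real.pi))) := by
  have h := ((Stirling.tendsto_stirlingSeq_sqrt_pi.log (by positivity)).comp
    (tendsto_add_atTop_nat 1)).add_const ((1 / 2) * Real.log 2)
  have e : Real.log √Real.pi + (1 / 2) * Real.log 2 = (1 / 2) * Real.log (2 * Real.pi) := by
    rw [Real.log_sqrt Real.pi_pos.le, Real.log_mul two_ne_zero Real.pi_ne_zero]; ring
  rw [e] at h
  refine h.congr fun N => ?_
  have hf : ∀ n : ℕ, Real.log (n.factorial : ℝ) = ∑ j ∈ Finset.range n, Real.log (j + 1) := by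
    intro n
    induction n with
    | zero => simp
    | succ n ih =>
      rw [Nat.factorial_succ, Finset.sum_range_succ, ← ih]
      push_cast
      rw [Real.log_mul (by positivity) (by positivity), add_comm]
  simp only [Function.comp]
  rw [Stirling.log_stirlingSeq_formula, hf, Finset.sum_range_succ]
  push_cast
  rw [Real.log_mul two_ne_zero (by positivity), Real.log_div (by positivity) (by positivity),
    Real.log_exp]
  ring

lemma tendsto_Q {x : ℂ} (hx : x ∈ slitPlane) :
    Tendsto (Q x) atTop (𝓝 ((1 / 2) * ((Real.eulerMascheroniConstant : ℂ) / (x + 1) -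
      (log (x + 1) - log x)) + (log (x + 1) - log x) + (1 / (x + 1)) *
      (0 - (((1 / 2) * Real.log (2 * Real.pi) : ℝ) : ℂ) - (1 / 2) * (log (x + 1) - log x)))) := by
  have hx1 := slit_add_one hx
  have hx0 := slitPlane_ne_zero hx1
  have hst := (continuous_ofReal.tendsto _).comp tendsto_st
  have hH := (continuous_ofReal.tendsto _).comp Real.tendsto_harmonic_sub_log_add_one
  have h := ((((hH.div_const (x + 1)).sub (tendsto_E1 hx)).const_mul (1 / 2)).add_const
    (log (x + 1) - log x)).add ((((tendsto_err hx).sub hst).sub_const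
      ((1 / 2) * (log (x + 1) - log x))).const_mul (1 / (x + 1)))
  refine h.congr fun N => ?_
  rw [sum_sz, Finset.sum_range_succ',
    show ((N : ℂ) + 1) * x + ((N + 1 : ℕ) : ℂ) = (N + 1) * (x + 1) by push_cast; ring,
    log_nat_mul hx1]
  simp only [Function.comp, Q, harmonic]
  push_cast
  rw [add_zero, log_nat_mul hx]
  simp only [one_div]
  field_simp
  ring

end ThreeTerm
theorem three_term_relation_S1 (x : ℂ) (hx : x ∈ Complex.slitPlane) :
    S1 x - S1 (x + 1) - (1 / (x + 1)) * S1 (x / (x + 1)) =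
      -(1 / (2 * (x + 1))) *
        ((Real.eulerMascheroniConstant : ℂ) - Complex.log (2 * Real.pi) -
          x * Complex.log (x / (x + 1))) := by
  have hx0 := Complex.slitPlane_ne_zero (ThreeTerm.slit_add_one hx)
  have h := tendsto_nhds_unique (ThreeTerm.tendsto_partial hx) (ThreeTerm.tendsto_Q hx)
  have hl : Complex.log x = Complex.log (x / (x + 1)) + Complex.log (x + 1) := by
    have := ThreeTerm.log_cone hx (a := 1) (b := 0) one_pos le_rfl
    simp only [Complex.ofReal_one, one_mul, Complex.ofReal_zero, add_zero] at this
    rw [div_mul_cancel₀ _ hx0] at this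
    exact this
  have hp : Complex.log (2 * Real.pi) = ((Real.log (2 * Real.pi) : ℝ) : ℂ) := by
    rw [Complex.ofReal_log (by positivity)]; push_cast; rfl
  rw [hp]
  have h' := neg_eq_iff_eq_neg.1 h
  rw [h', hl]
  push_cast
  field_simp
  ring
end

section
/- For x in ℂ \ (-∞, 0], the Ramanujan period function satisfies the three-term period relation 𝓕₁(x) - 𝓕₁(x+1) - (1/(x+1))·𝓕₁(x/(x+1)) = 0. -/
open MeasureTheory Set

theorem slit_ne_neg {z : ℂ} (hz : z ∈ Complex.slitPlane) (m : ℕ) : z ≠ -m := by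
  rintro rfl
  rw [Complex.mem_slitPlane_iff] at hz
  simp at hz
  have : (0:ℝ) ≤ m := Nat.cast_nonneg m
  linarith

theorem slit_add_nat {z : ℂ} (hz : z ∈ Complex.slitPlane) (m : ℕ) : z + m ∈ Complex.slitPlane := by
  rw [Complex.mem_slitPlane_iff] at hz ⊢
  simp
  have : (0:ℝ) ≤ m := Nat.cast_nonneg m
  rcases hz with h | h
  · left; linarith
  · right; exact h

theorem digammaC_add_one {z : ℂ} (hz : z ∈ Complex.slitPlane) :
    digammaC (z + 1) = digammaC z + 1 / z := by
  have := Complex.digamma_apply_add_one z (slit_ne_neg hz)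
  rw [Complex.digamma_def, logDeriv_apply, logDeriv_apply] at this
  simpa [digammaC] using this

theorem digammaC_add_nat {z : ℂ} (hz : z ∈ Complex.slitPlane) (n : ℕ) :
    digammaC (z + n) = digammaC z + ∑ k ∈ Finset.range n, 1 / (z + k) := by
  induction n with
  | zero => simp
  | succ n ih =>
    rw [Finset.sum_range_succ, ← add_assoc, ← ih, ← digammaC_add_one (slit_add_nat hz n)]
    push_cast; ring_nf

theorem log_sub_of_same_side {u v : ℂ} (hu : u ∈ Complex.slitPlane) (hv : v ∈ Complex.slitPlane)
    (h : (0 ≤ u.im ∧ 0 ≤ v.im) ∨ (u.im ≤ 0 ∧ v.im ≤ 0)) :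
    Complex.log (u / v) = Complex.log u - Complex.log v := by
  have hu0 := Complex.slitPlane_ne_zero hu
  have hv0 := Complex.slitPlane_ne_zero hv
  have hup := (Complex.mem_slitPlane_iff_arg.1 hu).1
  have hvp := (Complex.mem_slitPlane_iff_arg.1 hv).1
  have h1 := Complex.neg_pi_lt_arg u
  have h2 := Complex.arg_le_pi u
  have h3 := Complex.neg_pi_lt_arg v
  have h4 := Complex.arg_le_pi v
  have h5 : u.arg < Real.pi := lt_of_le_of_ne h2 hup
  have h6 : v.arg < Real.pi := lt_of_le_of_ne h4 hvp
  have key : -Real.pi < u.arg - v.arg ∧ u.arg - v.arg < Real.pi := by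
    rcases h with ⟨a, b⟩ | ⟨a, b⟩
    · have := Complex.arg_nonneg_iff.2 a
      have := Complex.arg_nonneg_iff.2 b
      constructor <;> linarith
    · have ha : u.arg ≤ 0 := by
        rcases a.lt_or_eq with a | a
        · exact (Complex.arg_neg_iff.2 a).le
        · have : 0 < u.re := by
            rcases Complex.mem_slitPlane_iff.1 hu with h | h
            · exact h
            · exact absurd a h
          exact (Complex.arg_eq_zero_iff.2 ⟨this.le, a⟩).le
      have hb : v.arg ≤ 0 := by
        rcases b.lt_or_eq with a | a
        · exact (Complex.arg_neg_iff.2 a).le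
        · have : 0 < v.re := by
            rcases Complex.mem_slitPlane_iff.1 hv with h | h
            · exact h
            · exact absurd a h
          exact (Complex.arg_eq_zero_iff.2 ⟨this.le, a⟩).le
      constructor <;> linarith
  have e : u / v = Complex.exp (Complex.log u - Complex.log v) := by
    rw [Complex.exp_sub, Complex.exp_log hu0, Complex.exp_log hv0]
  rw [e, Complex.log_exp]
  · simpa [Complex.sub_im, Complex.log_im] using key.1
  · simpa [Complex.sub_im, Complex.log_im] using key.2.le

theorem log_one_add_bound {y : ℂ} (hy : ‖y‖ ≤ 1 / 2) :
    ‖Complex.log (1 + y) - (y - y ^ 2 / 2)‖ ≤ ‖y‖ ^ 3 := by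
  have h := Complex.norm_log_sub_logTaylor_le 2 (z := y) (by linarith)
  simp only [Complex.logTaylor, Finset.sum_range_succ, Finset.sum_range_zero] at h
  norm_num at h
  have e : Complex.log (1 + y) - (y - y ^ 2 / 2) = Complex.log (1 + y) - (y + -y ^ 2 / 2) := by ring
  rw [e]
  refine h.trans ?_
  have h2 : (1 - ‖y‖)⁻¹ ≤ 2 := by
    rw [inv_le_comm₀ (by linarith) (by norm_num)]; linarith
  have h3 : 0 ≤ ‖y‖ ^ 3 := by positivity
  nlinarith [mul_le_mul_of_nonneg_left h2 h3]

theorem digammaC_limit {z : ℂ} (hz : 0 < z.re) :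
    Filter.Tendsto (fun n : ℕ => (Real.log n : ℂ) - ∑ k ∈ Finset.range n, 1 / (z + 1 + k))
      Filter.atTop (nhds (digammaC (z + 1))) := by
  set c : ℕ → ℝ := fun k => Real.log ((k + 1 : ℕ) : ℝ) - Real.log (k : ℝ) with hc
  set R : ℝ := ‖z‖ + 1 with hR
  set t : Set ℂ := Metric.ball 0 R ∩ {w : ℂ | (-1 / 2 : ℝ) < w.re} with ht
  set g : ℕ → ℂ → ℂ := fun k w => w * c k - Complex.log (w + (k + 1 : ℝ)) + Real.log (k + 1 : ℝ) with hg
  set g' : ℕ → ℂ → ℂ := fun k w => c k - 1 / (w + (k + 1 : ℝ)) with hg'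
  have hRpos : 0 < R := by positivity
  have hslit : ∀ (k : ℕ) (w : ℂ), w ∈ t → w + ((k + 1 : ℝ) : ℂ) ∈ Complex.slitPlane := by
    intro k w hw
    rw [Complex.mem_slitPlane_iff]; left
    have h1 : (-1 / 2 : ℝ) < w.re := hw.2
    have : (0:ℝ) ≤ k := Nat.cast_nonneg k
    rw [Complex.add_re, Complex.ofReal_re]; linarith
  have hu : Summable (fun k : ℕ => (2 + 2 * R) * (1 / ((k + 1 : ℕ) : ℝ) ^ 2)) := by
    apply Summable.mul_left
    exact (summable_nat_add_iff 1).2 (Real.summable_one_div_nat_pow.2 (by norm_num))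
  have hopen : IsOpen t := Metric.isOpen_ball.inter (isOpen_lt continuous_const Complex.continuous_re)
  have hconv : IsPreconnected t :=
    ((convex_ball (0:ℂ) R).inter (convex_halfSpace_re_gt (-1/2))).isPreconnected
  have hder : ∀ (n : ℕ), ∀ y ∈ t, HasDerivAt (g n) (g' n y) y := by
    intro n y hy
    have h1 : HasDerivAt (fun w : ℂ => w * (c n : ℂ)) (1 * (c n : ℂ)) y := (hasDerivAt_id y).mul_const _
    have h2 : HasDerivAt (fun w : ℂ => Complex.log (w + (n + 1 : ℝ))) (1 / (y + (n + 1 : ℝ))) y :=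
      ((hasDerivAt_id y).add_const _).clog (hslit n y hy)
    have := (h1.sub h2).add_const ((Real.log (n + 1 : ℝ) : ℝ) : ℂ)
    simpa [hg, hg'] using this
  have hbd : ∀ (n : ℕ), ∀ y ∈ t, ‖g' n y‖ ≤ (2 + 2 * R) * (1 / ((n + 1 : ℕ) : ℝ) ^ 2) := by
    intro n y hy
    have hyr : (-1 / 2 : ℝ) < y.re := hy.2
    have hyn : ‖y‖ < R := by simpa using hy.1
    have hn0 : (0:ℝ) ≤ n := Nat.cast_nonneg n
    have hne := Complex.slitPlane_ne_zero (hslit n y hy)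
    have hlow : ((n:ℝ) + 1) / 2 ≤ ‖y + ((n + 1 : ℝ) : ℂ)‖ := by
      refine le_trans ?_ (Complex.re_le_norm _)
      rw [Complex.add_re, Complex.ofReal_re]; linarith
    have hcn : |c n - 1 / (n + 1)| ≤ 2 * (1 / ((n + 1 : ℕ) : ℝ) ^ 2) := by
      rcases Nat.eq_zero_or_pos n with rfl | hn
      · simp [hc]
      · have hn' : (1:ℝ) ≤ n := by exact_mod_cast hn
        have e : c n = Real.log (1 + 1 / n) := by
          simp only [hc]
          rw [← Real.log_div (by positivity) (by positivity)]
          congr 1; push_cast; field_simp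
        have up : c n ≤ 1 / n := by
          rw [e]; have := Real.log_le_sub_one_of_pos (x := 1 + 1 / (n:ℝ)) (by positivity); linarith
        have lo : 1 / ((n:ℝ) + 1) ≤ c n := by
          rw [e]
          have := Real.one_sub_inv_le_log_of_pos (x := 1 + 1 / (n:ℝ)) (by positivity)
          refine le_trans (le_of_eq ?_) this
          field_simp; ring
        rw [abs_of_nonneg (by linarith)]
        have : 1 / (n:ℝ) - 1 / (n + 1) ≤ 2 * (1 / ((n + 1 : ℕ) : ℝ) ^ 2) := by
          push_cast
          rw [div_sub_div _ _ (by positivity) (by positivity), mul_one_div, div_le_div_iff₀ (by positivity) (by positivity)]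
          nlinarith
        linarith
    have e1 : g' n y = ((c n - 1 / (n + 1) : ℝ) : ℂ) + y / (((n:ℝ) + 1 : ℝ) * (y + ((n + 1 : ℝ) : ℂ))) := by
      have : (((n:ℝ) + 1 : ℝ) : ℂ) ≠ 0 := by
        rw [Complex.ofReal_ne_zero]; positivity
      simp only [hg']
      push_cast at this hne ⊢
      field_simp
      ring
    rw [e1]
    refine (norm_add_le _ _).trans ?_
    rw [Complex.norm_real, Real.norm_eq_abs, norm_div, norm_mul, Complex.norm_real, Real.norm_eq_abs,
      abs_of_nonneg (by linarith : (0:ℝ) ≤ n + 1)]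
    have : ‖y‖ / (((n:ℝ) + 1) * ‖y + ((n + 1 : ℝ) : ℂ)‖) ≤ 2 * R * (1 / ((n + 1 : ℕ) : ℝ) ^ 2) := by
      calc ‖y‖ / (((n:ℝ) + 1) * ‖y + ((n + 1 : ℝ) : ℂ)‖) ≤ R / (((n:ℝ) + 1) * (((n:ℝ) + 1) / 2)) := by gcongr
        _ = _ := by push_cast; field_simp
    linarith
  have h0 : (0:ℂ) ∈ t := ⟨by simpa using hRpos, by simp; norm_num⟩
  have hs0 : Summable (fun n => g n 0) := by
    have : (fun n => g n 0) = fun _ => 0 := by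
      funext n
      simp only [hg]
      rw [Complex.ofReal_log (by positivity)]; simp
    rw [this]; exact summable_zero
  have hzt : z ∈ t := ⟨by simp [hR], by show (-1 / 2 : ℝ) < z.re; linarith⟩
  have hD := hasDerivAt_tsum_of_isPreconnected hu hopen hconv hder hbd h0 hs0 hzt
  have hsum : ∀ w ∈ t, Summable (fun n => g n w) := fun w hw =>
    summable_of_summable_hasDerivAt_of_isPreconnected hu hopen hconv hder hbd h0 hs0 hw
  have hsumlog : ∀ n : ℕ, ∑ k ∈ Finset.range n, c k = Real.log n := by
    intro n
    rw [Finset.sum_range_sub (fun k : ℕ => Real.log (k:ℝ))]; simp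
  have hexp : ∀ w ∈ t, w ≠ 0 → Complex.exp (∑' n, g n w) = Complex.Gamma (w + 1) := by
    intro w hw hw0
    have h1 : Filter.Tendsto (fun n : ℕ => Complex.exp (∑ k ∈ Finset.range n, g k w)) Filter.atTop
        (nhds (Complex.exp (∑' n, g n w))) :=
      (Complex.continuous_exp.tendsto _).comp (hsum w hw).hasSum.tendsto_sum_nat
    have h2 : Filter.Tendsto (fun n : ℕ => w * Complex.GammaSeq w n) Filter.atTop
        (nhds (w * Complex.Gamma w)) := (Complex.GammaSeq_tendsto_Gamma w).const_mul w
    rw [Complex.Gamma_add_one w hw0]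
    refine tendsto_nhds_unique (h1.congr' ?_) h2
    filter_upwards [Filter.eventually_gt_atTop 0] with n hn
    have hn' : (n:ℂ) ≠ 0 := by exact_mod_cast hn.ne'
    have e1 : ∑ k ∈ Finset.range n, g k w = w * Real.log n +
        ∑ k ∈ Finset.range n, ((Real.log (k + 1 : ℝ) : ℂ) - Complex.log (w + (k + 1 : ℝ))) := by
      rw [← hsumlog n]; push_cast; rw [Finset.mul_sum, ← Finset.sum_add_distrib]
      refine Finset.sum_congr rfl fun k _ => ?_
      simp only [hg]; push_cast; ring
    rw [e1, Complex.exp_add, Complex.exp_sum]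
    have e2 : ∀ k ∈ Finset.range n, Complex.exp ((Real.log (k + 1 : ℝ) : ℂ) - Complex.log (w + (k + 1 : ℝ)))
        = ((k:ℂ) + 1) / (w + (k + 1)) := by
      intro k _
      rw [Complex.exp_sub, Complex.exp_log (Complex.slitPlane_ne_zero (hslit k w hw)),
        ← Complex.ofReal_exp, Real.exp_log (by positivity)]
      push_cast; rfl
    rw [Finset.prod_congr rfl e2, Finset.prod_div_distrib, Complex.GammaSeq, Finset.prod_range_succ',
      Complex.cpow_def_of_ne_zero hn', ← Finset.prod_range_add_one_eq_factorial]
    push_cast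
    have : ∏ x ∈ Finset.range n, (w + ((x:ℂ) + 1)) ≠ 0 := by
      rw [Finset.prod_ne_zero_iff]; intro k _
      have := Complex.slitPlane_ne_zero (hslit k w hw)
      push_cast at this; exact this
    rw [add_zero, mul_comm w (Complex.log _)]
    field_simp
  have hz0 : z ≠ 0 := by rintro rfl; simp at hz
  have hz1 : z + 1 ∈ Complex.slitPlane := by
    rw [Complex.mem_slitPlane_iff]; left; simp; linarith
  have hGd : HasDerivAt (fun w => Complex.Gamma (w + 1)) (deriv Complex.Gamma (z + 1)) z :=
    (Complex.differentiableAt_Gamma (z + 1) (slit_ne_neg hz1)).hasDerivAt.comp_add_const z 1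
  have hGd2 : HasDerivAt (fun w => Complex.Gamma (w + 1))
      (Complex.exp (∑' n, g n z) * ∑' n, g' n z) z := by
    refine hD.cexp.congr_of_eventuallyEq ?_
    filter_upwards [hopen.mem_nhds hzt, isOpen_ne.mem_nhds hz0] with w hw hw0
    exact (hexp w hw hw0).symm
  have hval : digammaC (z + 1) = ∑' n, g' n z := by
    rw [digammaC, hGd.unique hGd2, hexp z hzt hz0, mul_div_cancel_left₀]
    exact Complex.Gamma_ne_zero (slit_ne_neg hz1)
  have hs' : Summable (fun n => g' n z) :=
    Summable.of_norm_bounded hu (fun n => hbd n z hzt)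
  rw [hval]
  refine hs'.hasSum.tendsto_sum_nat.congr fun n => ?_
  simp only [hg']
  rw [Finset.sum_sub_distrib, ← hsumlog n]
  push_cast
  congr 1
  refine Finset.sum_congr rfl fun k _ => ?_
  ring_nf

noncomputable def phiC (z : ℂ) : ℂ := digammaC z - Complex.log z + 1 / (2 * z)

theorem tendsto_inv_add_nat (z : ℂ) :
    Filter.Tendsto (fun n : ℕ => (z + n)⁻¹) Filter.atTop (nhds 0) := by
  refine Filter.tendsto_inv₀_cobounded.comp ?_
  rw [← tendsto_norm_atTop_iff_cobounded]
  have h : Filter.Tendsto (fun n : ℕ => (n:ℝ) + -‖z‖) Filter.atTop Filter.atTop :=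
    Filter.tendsto_atTop_add_const_right _ _ tendsto_natCast_atTop_atTop
  refine Filter.tendsto_atTop_mono (fun n => ?_) h
  have := norm_sub_norm_le (n:ℂ) (-z)
  rw [sub_neg_eq_add, norm_neg, Complex.norm_natCast, add_comm (n:ℂ) z] at this
  linarith

theorem phiC_tendsto_zero_of_re {z : ℂ} (hz : 0 < z.re) :
    Filter.Tendsto (fun n : ℕ => phiC (z + 1 + n)) Filter.atTop (nhds 0) := by
  have h1 := digammaC_limit hz
  have hz1 : z + 1 ∈ Complex.slitPlane := by
    rw [Complex.mem_slitPlane_iff]; left; simp; linarith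
  have hinv : Filter.Tendsto (fun n : ℕ => ((n : ℕ) : ℂ)⁻¹) Filter.atTop (nhds 0) := by
    simpa using tendsto_inv_add_nat 0
  have h2 : Filter.Tendsto (fun n : ℕ => Complex.log (1 + (z + 1) * (n : ℂ)⁻¹)) Filter.atTop (nhds 0) := by
    have : Filter.Tendsto (fun n : ℕ => 1 + (z + 1) * (n : ℂ)⁻¹) Filter.atTop (nhds 1) := by
      simpa using (hinv.const_mul (z + 1)).const_add 1
    simpa using this.clog (by simp)
  have h3 : Filter.Tendsto (fun n : ℕ => 1 / (2 * (z + 1 + n))) Filter.atTop (nhds 0) := by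
    have := (tendsto_inv_add_nat (z + 1)).const_mul (1 / 2)
    simp only [mul_zero] at this
    refine this.congr fun n => ?_
    rw [one_div, one_div, mul_inv]
  have h4 := (((h1.const_sub (digammaC (z + 1))).sub h2).add h3)
  simp only [sub_self, add_zero] at h4
  refine h4.congr' ?_
  filter_upwards [Filter.eventually_gt_atTop 0] with n hn
  have hn' : (n:ℂ) ≠ 0 := by exact_mod_cast hn.ne'
  have hne := Complex.slitPlane_ne_zero (slit_add_nat hz1 n)
  have e : z + 1 + n = ((n:ℝ):ℂ) * (1 + (z + 1) * (n : ℂ)⁻¹) := by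
    push_cast; field_simp; ring
  have hne2 : 1 + (z + 1) * (n : ℂ)⁻¹ ≠ 0 := by
    intro h; rw [h, mul_zero] at e; exact hne e
  have hl : Complex.log (z + 1 + n) = Real.log n + Complex.log (1 + (z + 1) * (n : ℂ)⁻¹) := by
    rw [e, Complex.log_ofReal_mul (by exact_mod_cast hn) hne2]
  rw [phiC, digammaC_add_nat hz1, hl]
  ring

theorem phiC_tendsto_zero (z : ℂ) :
    Filter.Tendsto (fun n : ℕ => phiC (z + n)) Filter.atTop (nhds 0) := by
  obtain ⟨M, hM⟩ := exists_nat_gt (-z.re)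
  have h := phiC_tendsto_zero_of_re (z := z + M) (by simp; linarith)
  refine (Filter.tendsto_add_atTop_iff_nat (M + 1)).1 (h.congr fun n => ?_)
  congr 1; push_cast; ring

theorem phiC_step {z : ℂ} (hz : z ∈ Complex.slitPlane) (h2 : 2 ≤ ‖z‖) :
    ‖phiC z - phiC (z + 1)‖ ≤ 2 / ‖z‖ ^ 3 := by
  have hz0 := Complex.slitPlane_ne_zero hz
  have hz1 : z + 1 ∈ Complex.slitPlane := by simpa using slit_add_nat hz 1
  have hz10 := Complex.slitPlane_ne_zero hz1
  set y : ℂ := 1 / z with hy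
  have hny : ‖y‖ = 1 / ‖z‖ := by rw [hy, norm_div, norm_one]
  have hyle : ‖y‖ ≤ 1 / 2 := by
    rw [hny]; exact one_div_le_one_div_of_le (by norm_num) h2
  have h1y : 1 + y = (z + 1) / z := by rw [hy]; field_simp
  have hlog : Complex.log (1 + y) = Complex.log (z + 1) - Complex.log z := by
    rw [h1y]
    apply log_sub_of_same_side hz1 hz
    rcases le_total 0 z.im with h | h
    · left; simpa using h
    · right; simpa using h
  have hne : 1 + y ≠ 0 := by rw [h1y]; exact div_ne_zero hz10 hz0
  have e : phiC z - phiC (z + 1) = (Complex.log (1 + y) - (y - y ^ 2 / 2)) - y ^ 3 / (2 * (1 + y)) := by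
    rw [phiC, phiC, digammaC_add_one hz, hlog, h1y, hy]
    field_simp
    ring
  rw [e]
  refine (norm_sub_le _ _).trans ?_
  have hb := log_one_add_bound hyle
  have hb2 : ‖y ^ 3 / (2 * (1 + y))‖ ≤ ‖y‖ ^ 3 := by
    rw [norm_div, norm_pow, norm_mul]
    have : 1 / 2 ≤ ‖1 + y‖ := by
      have := norm_sub_norm_le (1:ℂ) (-y)
      rw [norm_one, norm_neg, sub_neg_eq_add] at this
      linarith
    apply div_le_self (by positivity)
    rw [Complex.norm_ofNat]; linarith
  have : ‖y‖ ^ 3 = 1 / ‖z‖ ^ 3 := by rw [hny, div_pow, one_pow]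
  rw [this] at hb hb2
  calc _ ≤ 1 / ‖z‖ ^ 3 + 1 / ‖z‖ ^ 3 := add_le_add hb hb2
    _ = _ := by ring

theorem sum_inv_cube (N : ℕ) (hN : 2 ≤ N) (K : ℕ) :
    ∑ k ∈ Finset.range K, 1 / ((N : ℝ) + k) ^ 3 ≤ 1 / (N : ℝ) ^ 2 - 1 / ((N : ℝ) + K) ^ 2 := by
  induction K with
  | zero => simp
  | succ K ih =>
    rw [Finset.sum_range_succ]
    have hN' : (2:ℝ) ≤ N := by exact_mod_cast hN
    have hK : (0:ℝ) ≤ K := Nat.cast_nonneg K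
    set m : ℝ := (N:ℝ) + K with hm
    have hm2 : 2 ≤ m := by linarith
    have : 1 / m ^ 3 ≤ 1 / m ^ 2 - 1 / (m + 1) ^ 2 := by
      rw [div_sub_div _ _ (by positivity) (by positivity), div_le_div_iff₀ (by positivity) (by positivity)]
      have : 0 ≤ m ^ 2 * (m ^ 2 - m - 1) := by
        apply mul_nonneg (by positivity); nlinarith
      nlinarith
    push_cast
    rw [← add_assoc]
    linarith

theorem slit_segment {p w : ℂ} (hp : p ∈ Complex.slitPlane) (hw : w ∈ segment ℝ p 1) :
    w ∈ Complex.slitPlane := by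
  have := Complex.starConvex_one_slitPlane
  rw [starConvex_iff_segment_subset] at this
  rw [segment_symm] at hw
  exact this hp hw

theorem segment_lower {p : ℂ} (hp : p ∈ Complex.slitPlane) :
    ∃ δ : ℝ, 0 < δ ∧ ∀ w ∈ segment ℝ p 1, δ ≤ ‖w‖ := by
  have hc : IsCompact (segment ℝ p 1) := by
    rw [segment_eq_image]
    exact isCompact_Icc.image (by fun_prop)
  obtain ⟨w0, hw0, hmin⟩ := hc.exists_isMinOn ⟨p, left_mem_segment ℝ p 1⟩ continuous_norm.continuousOn
  exact ⟨‖w0‖, norm_pos_iff.2 (Complex.slitPlane_ne_zero (slit_segment hp hw0)), fun w hw => hmin hw⟩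

theorem slit_natCast_mul {w : ℂ} (hw : w ∈ Complex.slitPlane) {N : ℕ} (hN : 0 < N) :
    (N : ℂ) * w ∈ Complex.slitPlane := by
  have hN' : (0:ℝ) < N := by exact_mod_cast hN
  rw [Complex.mem_slitPlane_iff] at hw ⊢
  have e1 : ((N:ℂ) * w).re = N * w.re := by simp
  have e2 : ((N:ℂ) * w).im = N * w.im := by simp
  rw [e1, e2]
  rcases hw with h | h
  · left; positivity
  · right; exact mul_ne_zero hN'.ne' h

theorem phiC_bound {p : ℂ} (hp : p ∈ Complex.slitPlane) :
    ∃ C : ℝ, ∃ N0 : ℕ, 0 < N0 ∧ ∀ N : ℕ, N0 ≤ N → ∀ w ∈ segment ℝ p 1,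
      ‖phiC (N * w)‖ ≤ C / (N : ℝ) ^ 2 := by
  obtain ⟨δ, hδ, hmin⟩ := segment_lower hp
  obtain ⟨N1, hN1⟩ := exists_nat_gt (2 / δ)
  refine ⟨2 / δ ^ 3, max N1 2, by positivity, fun N hN w hw => ?_⟩
  have hN2 : 2 ≤ N := le_trans (le_max_right _ _) hN
  have hNN : N1 ≤ N := le_trans (le_max_left _ _) hN
  have hNr : (2:ℝ) ≤ N := by exact_mod_cast hN2
  have hNδ : 2 ≤ N * δ := by
    have : 2 / δ ≤ N := hN1.le.trans (by exact_mod_cast hNN)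
    rwa [div_le_iff₀ hδ] at this
  set z : ℂ := N * w with hz
  have hzs : z ∈ Complex.slitPlane := slit_natCast_mul (slit_segment hp hw) (by omega)
  have hlow : ∀ k : ℕ, ((N:ℝ) + k) * δ ≤ ‖z + k‖ := by
    intro k
    have hk : (0:ℝ) ≤ k := Nat.cast_nonneg k
    have hpos : (0:ℝ) < N + k := by linarith
    set v : ℂ := ((N:ℝ) / (N + k) : ℝ) • w + ((k:ℝ) / (N + k) : ℝ) • (1:ℂ) with hv
    have hvs : v ∈ segment ℝ p 1 := by
      apply (convex_segment p 1) hw (right_mem_segment ℝ p 1) (by positivity) (by positivity)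
      field_simp
    have e : z + k = (((N:ℝ) + k : ℝ) : ℂ) * v := by
      have : ((N:ℂ) + k) ≠ 0 := by
        have := Complex.ofReal_ne_zero.2 hpos.ne'
        push_cast at this; exact this
      rw [hv, hz, Complex.real_smul, Complex.real_smul]; push_cast; field_simp
    rw [e, norm_mul, Complex.norm_real, Real.norm_eq_abs, abs_of_pos hpos]
    gcongr
    exact hmin v hvs
  have hstep : ∀ k : ℕ, ‖phiC (z + k) - phiC (z + (k + 1 : ℕ))‖ ≤ 2 / δ ^ 3 * (1 / ((N:ℝ) + k) ^ 3) := by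
    intro k
    have hk : (0:ℝ) ≤ k := Nat.cast_nonneg k
    have h1 := hlow k
    have h2 : 2 ≤ ‖z + k‖ := by nlinarith
    have h3 := phiC_step (slit_add_nat hzs k) h2
    push_cast
    rw [← add_assoc]
    refine h3.trans ?_
    calc 2 / ‖z + k‖ ^ 3 ≤ 2 / (((N:ℝ) + k) * δ) ^ 3 := by gcongr
      _ = _ := by field_simp
  have htel : ∀ K : ℕ, ‖phiC z - phiC (z + K)‖ ≤ 2 / δ ^ 3 / (N : ℝ) ^ 2 := by
    intro K
    have e : phiC z - phiC (z + K) = ∑ k ∈ Finset.range K, (phiC (z + k) - phiC (z + (k + 1 : ℕ))) := by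
      rw [Finset.sum_range_sub' (fun k : ℕ => phiC (z + k))]; simp
    rw [e]
    refine (norm_sum_le _ _).trans ((Finset.sum_le_sum fun k _ => hstep k).trans ?_)
    rw [← Finset.mul_sum, div_eq_mul_one_div (2 / δ ^ 3)]
    gcongr
    refine (sum_inv_cube N hN2 K).trans ?_
    have : 0 ≤ 1 / ((N : ℝ) + K) ^ 2 := by positivity
    linarith
  have hlim : Filter.Tendsto (fun K : ℕ => ‖phiC z - phiC (z + K)‖) Filter.atTop (nhds ‖phiC z‖) := by
    simpa using ((phiC_tendsto_zero z).const_sub (phiC z)).norm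
  exact le_of_tendsto' hlim htel

theorem phiC_summable {p : ℂ} (hp : p ∈ Complex.slitPlane) :
    Summable (fun n : ℕ => phiC ((n + 1) * p)) := by
  obtain ⟨C, N0, h0, h⟩ := phiC_bound hp
  have h1 : Summable (fun n : ℕ => phiC ((n : ℂ) * p)) := by
    have hs : Summable (fun n : ℕ => C * (1 / (n : ℝ) ^ 2)) :=
      (Real.summable_one_div_nat_pow.2 (by norm_num)).mul_left C
    refine Summable.of_norm_bounded_eventually_nat hs ?_
    filter_upwards [Filter.eventually_ge_atTop N0] with n hn
    rw [mul_one_div]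
    exact h n hn p (left_mem_segment ℝ p 1)
  have := (summable_nat_add_iff 1).2 h1
  simpa using this

/-- The trapezoid-type primitive. -/
noncomputable def HH (r z : ℂ) : ℂ := z * Complex.log z - z + r / 2 * Complex.log z

theorem digamma_primitive {r a z : ℂ} (ha : a ≠ 0) (har : a + r = 1)
    (hz : z ∈ Complex.slitPlane) (hza : z + a ∈ Complex.slitPlane)
    (hside : (0 ≤ (z + a).im ∧ 0 ≤ z.im) ∨ ((z + a).im ≤ 0 ∧ z.im ≤ 0))
    (h1 : 2 * ‖a‖ ≤ ‖z‖) (h2 : ‖a + r / 2‖ ≤ ‖z‖) :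
    ‖digammaC (z + 1) - 1 / a * (HH r (z + a) - HH r z)‖ ≤
      ‖phiC z‖ + (‖a + r / 2‖ * ‖a‖ + 2 * ‖a‖ ^ 2) / ‖z‖ ^ 2 := by
  have hz0 := Complex.slitPlane_ne_zero hz
  have hzpos : 0 < ‖z‖ := norm_pos_iff.2 hz0
  have hapos : 0 < ‖a‖ := norm_pos_iff.2 ha
  set y : ℂ := a / z with hy
  have hny : ‖y‖ = ‖a‖ / ‖z‖ := by rw [hy, norm_div]
  have hyle : ‖y‖ ≤ 1 / 2 := by
    rw [hny, div_le_iff₀ hzpos]; linarith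
  have hlog : Complex.log (1 + y) = Complex.log (z + a) - Complex.log z := by
    rw [← log_sub_of_same_side hza hz hside, hy]; congr 1; field_simp
  set ρ : ℂ := Complex.log (1 + y) - (y - y ^ 2 / 2) with hρ
  have hb : ‖ρ‖ ≤ ‖y‖ ^ 3 := log_one_add_bound hyle
  have hl : Complex.log (z + a) = Complex.log z + (y - y ^ 2 / 2 + ρ) := by
    rw [hρ, hlog]; ring
  have e : digammaC (z + 1) - 1 / a * (HH r (z + a) - HH r z) =
      phiC z + ((a + r / 2) * a / (2 * z ^ 2) - (z + (a + r / 2)) * ρ / a) := by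
    have hr : r = 1 - a := by rw [← har]; ring
    rw [digammaC_add_one hz, HH, HH, hl, phiC, hy, hr]
    field_simp
    ring
  rw [e]
  refine (norm_add_le _ _).trans ?_
  gcongr
  refine (norm_sub_le _ _).trans ?_
  have b1 : ‖(a + r / 2) * a / (2 * z ^ 2)‖ ≤ ‖a + r / 2‖ * ‖a‖ / ‖z‖ ^ 2 := by
    rw [norm_div, norm_mul, norm_mul, norm_pow, Complex.norm_ofNat]
    gcongr
    nlinarith [sq_nonneg ‖z‖]
  have b2 : ‖(z + (a + r / 2)) * ρ / a‖ ≤ 2 * ‖a‖ ^ 2 / ‖z‖ ^ 2 := by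
    rw [norm_div, norm_mul]
    have : ‖z + (a + r / 2)‖ ≤ 2 * ‖z‖ := (norm_add_le _ _).trans (by linarith)
    calc ‖z + (a + r / 2)‖ * ‖ρ‖ / ‖a‖ ≤ (2 * ‖z‖) * (‖a‖ / ‖z‖) ^ 3 / ‖a‖ := by
          rw [← hny]; gcongr
      _ = _ := by field_simp
  rw [add_div]
  exact add_le_add b1 b2

theorem sum_digamma_limit {r a : ℂ} (ha : a ≠ 0) (har : a + r = 1) (hr : r ∈ Complex.slitPlane) :
    Filter.Tendsto (fun N : ℕ => ∑ j ∈ Finset.range N, digammaC (N - (j + 1) * a + 1)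
      - 1 / a * (HH r N - HH r (N * r))) Filter.atTop (nhds 0) := by
  obtain ⟨C, N0, hN0, hC⟩ := phiC_bound hr
  obtain ⟨δ, hδ, hmin⟩ := segment_lower hr
  obtain ⟨N1, hN1⟩ := exists_nat_gt ((2 * ‖a‖ + ‖a + r / 2‖) / δ)
  set D : ℝ := C + (‖a + r / 2‖ * ‖a‖ + 2 * ‖a‖ ^ 2) / δ ^ 2 with hD
  have hlim : Filter.Tendsto (fun N : ℕ => D * ((N:ℝ))⁻¹) Filter.atTop (nhds 0) := by
    simpa using (tendsto_inv_atTop_nhds_zero_nat (𝕜 := ℝ)).const_mul D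
  refine squeeze_zero_norm' ?_ hlim
  filter_upwards [Filter.eventually_ge_atTop N0, Filter.eventually_ge_atTop N1] with N hN hNN
  have hNpos : 0 < N := lt_of_lt_of_le hN0 hN
  have hNr : (0:ℝ) < N := by exact_mod_cast hNpos
  have hNc : (N:ℂ) ≠ 0 := by exact_mod_cast hNpos.ne'
  have hseg : ∀ j : ℕ, j ≤ N → ∃ w ∈ segment ℝ r 1, (N:ℂ) - j * a = N * w ∧
      ((N:ℂ) - j * a).im = j * r.im := by
    intro j hj
    have hj' : (j:ℝ) ≤ N := by exact_mod_cast hj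
    refine ⟨((j:ℝ) / N : ℝ) • r + (1 - (j:ℝ) / N : ℝ) • (1:ℂ), ⟨_, _, by positivity, ?_, by ring, rfl⟩, ?_, ?_⟩
    · rw [sub_nonneg, div_le_one hNr]; exact hj'
    · have : a = 1 - r := by rw [← har]; ring
      rw [this, Complex.real_smul, Complex.real_smul]; push_cast; field_simp; ring
    · have : a = 1 - r := by rw [← har]; ring
      rw [this]; simp
  have hslit : ∀ j : ℕ, j ≤ N → (N:ℂ) - j * a ∈ Complex.slitPlane := by
    intro j hj
    obtain ⟨w, hw, e, -⟩ := hseg j hj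
    rw [e]; exact slit_natCast_mul (slit_segment hr hw) hNpos
  have hterm : ∀ j ∈ Finset.range N, ‖digammaC (N - (j + 1) * a + 1) -
      1 / a * (HH r (N - j * a) - HH r (N - (j + 1 : ℕ) * a))‖ ≤ D / (N:ℝ) ^ 2 := by
    intro j hj
    have hj := Finset.mem_range.1 hj
    obtain ⟨w, hw, e, him⟩ := hseg (j + 1) hj
    obtain ⟨w', hw', e', him'⟩ := hseg j hj.le
    set z : ℂ := (N:ℂ) - (j + 1 : ℕ) * a with hz
    have hza : (N:ℂ) - j * a = z + a := by rw [hz]; push_cast; ring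
    have hzn : N * δ ≤ ‖z‖ := by
      rw [e, norm_mul, Complex.norm_natCast]; gcongr; exact hmin w hw
    have hbig : 2 * ‖a‖ + ‖a + r / 2‖ ≤ ‖z‖ := by
      refine le_trans ?_ hzn
      rw [← div_le_iff₀ hδ]
      exact hN1.le.trans (by exact_mod_cast hNN)
    have hside : (0 ≤ (z + a).im ∧ 0 ≤ z.im) ∨ ((z + a).im ≤ 0 ∧ z.im ≤ 0) := by
      rw [← hza, him, him']
      rcases le_total 0 r.im with h | h
      · left; constructor <;> positivity
      · right; constructor <;> exact mul_nonpos_of_nonneg_of_nonpos (Nat.cast_nonneg _) h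
    have hs2 := hslit j hj.le
    rw [hza] at hs2
    have hmain := digamma_primitive ha har (hslit (j + 1) hj) hs2 hside
      (by have := norm_nonneg (a + r / 2); linarith) (by have := norm_nonneg a; linarith)
    rw [hza]
    have e3 : (N:ℂ) - (j + 1) * a + 1 = z + 1 := by rw [hz]; push_cast; ring
    rw [e3]
    refine hmain.trans ?_
    have hphi := hC N hN w hw
    rw [← e] at hphi
    rw [hD, add_div C]
    refine add_le_add hphi ?_
    calc (‖a + r / 2‖ * ‖a‖ + 2 * ‖a‖ ^ 2) / ‖z‖ ^ 2
        ≤ (‖a + r / 2‖ * ‖a‖ + 2 * ‖a‖ ^ 2) / (N * δ) ^ 2 := by gcongr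
      _ = _ := by field_simp
  have htel : 1 / a * (HH r N - HH r (N * r)) =
      ∑ j ∈ Finset.range N, 1 / a * (HH r (N - j * a) - HH r (N - (j + 1 : ℕ) * a)) := by
    rw [← Finset.mul_sum, Finset.sum_range_sub' (fun j : ℕ => HH r (N - j * a))]
    have : (N:ℂ) - N * a = N * r := by
      have : a = 1 - r := by rw [← har]; ring
      rw [this]; ring
    rw [this]; simp
  rw [htel, ← Finset.sum_sub_distrib]
  refine (norm_sum_le _ _).trans ((Finset.sum_le_sum hterm).trans (le_of_eq ?_))
  rw [Finset.sum_const, Finset.card_range, nsmul_eq_mul]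
  field_simp

theorem stirling_harmonic_limit :
    Filter.Tendsto (fun N : ℕ => ∑ i ∈ Finset.range N, Real.log (i + 1)
      - (∑ i ∈ Finset.range N, 1 / ((i:ℝ) + 1)) / 2 - N * Real.log N + N) Filter.atTop
      (nhds (Real.log (2 * Real.pi) / 2 - Real.eulerMascheroniConstant / 2)) := by
  have h1 := Stirling.tendsto_stirlingSeq_sqrt_pi.log (Real.sqrt_pos.2 Real.pi_pos).ne'
  have h2 := Real.tendsto_harmonic_sub_log
  have h3 := (h1.sub (h2.div_const 2)).add_const (Real.log 2 / 2)
  have e : Real.log (√Real.pi) - Real.eulerMascheroniConstant / 2 + Real.log 2 / 2 =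
      Real.log (2 * Real.pi) / 2 - Real.eulerMascheroniConstant / 2 := by
    rw [Real.log_sqrt Real.pi_pos.le, Real.log_mul (by norm_num) Real.pi_ne_zero]; ring
  rw [e] at h3
  refine h3.congr' ?_
  filter_upwards [Filter.eventually_gt_atTop 0] with N hN
  have hN' : (0:ℝ) < N := by exact_mod_cast hN
  have hf : Real.log (N.factorial : ℝ) = ∑ i ∈ Finset.range N, Real.log ((i:ℝ) + 1) := by
    rw [← Finset.prod_range_add_one_eq_factorial]
    push_cast
    rw [Real.log_prod]
    intro i _; positivity
  have hh : ((harmonic N : ℚ) : ℝ) = ∑ i ∈ Finset.range N, 1 / ((i:ℝ) + 1) := by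
    rw [harmonic]; push_cast; simp
  rw [Stirling.log_stirlingSeq_formula, hf, hh, Real.log_mul (by norm_num) hN'.ne',
    Real.log_div hN'.ne' (Real.exp_pos 1).ne', Real.log_exp]
  ring

theorem S1_tendsto {p : ℂ} (hp : p ∈ Complex.slitPlane) :
    Filter.Tendsto (fun N : ℕ => ∑ i ∈ Finset.range N, phiC ((i + 1) * p)) Filter.atTop
      (nhds (S1 p)) := by
  have := (phiC_summable hp).hasSum.tendsto_sum_nat
  have e : S1 p = ∑' n : ℕ, phiC ((n + 1) * p) := by
    rw [S1]; congr 1; funext n; rw [phiC, mul_assoc]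
  rw [e]; exact this

theorem slit_succ_mul {p : ℂ} (hp : p ∈ Complex.slitPlane) (i : ℕ) :
    ((i:ℂ) + 1) * p ∈ Complex.slitPlane := by
  have := slit_natCast_mul hp (Nat.succ_pos i)
  simpa using this

theorem log_succ_mul {p : ℂ} (hp : p ∈ Complex.slitPlane) (i : ℕ) :
    Complex.log (((i:ℂ) + 1) * p) = (Real.log ((i:ℝ) + 1) : ℂ) + Complex.log p := by
  have := Complex.log_ofReal_mul (r := (i:ℝ) + 1) (by positivity) (Complex.slitPlane_ne_zero hp)
  rw [← this]; push_cast; rfl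

theorem finite_identity {x r a : ℂ} (hx : x ∈ Complex.slitPlane) (hx1 : x + 1 ∈ Complex.slitPlane)
    (hr : r ∈ Complex.slitPlane) (hra : r = a * x) (hax : a * (x + 1) = 1)
    (hlog : Complex.log r = Complex.log x - Complex.log (x + 1)) (N : ℕ) :
    ∑ i ∈ Finset.range N, phiC ((i + 1) * x) - ∑ i ∈ Finset.range N, phiC ((i + 1) * (x + 1))
      - a * ∑ i ∈ Finset.range N, phiC ((i + 1) * r) =
    a * (-(∑ j ∈ Finset.range N, digammaC (N - (j + 1) * a + 1))
      + ∑ i ∈ Finset.range N, (Real.log ((i:ℝ) + 1) : ℂ) - x * N * Complex.log r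
      - (∑ i ∈ Finset.range N, 1 / ((i:ℂ) + 1)) / 2) := by
  have hx0 := Complex.slitPlane_ne_zero hx
  have hx10 := Complex.slitPlane_ne_zero hx1
  have hr0 := Complex.slitPlane_ne_zero hr
  have ha0 : a ≠ 0 := by rintro rfl; simp at hax
  have ha : a = 1 / (x + 1) := by field_simp; exact hax
  have hi0 : ∀ i : ℕ, (i:ℂ) + 1 ≠ 0 := fun i => Nat.cast_add_one_ne_zero i
  have t1 : ∀ i : ℕ, phiC ((i + 1) * x) - phiC ((i + 1) * (x + 1)) =
      -(∑ m ∈ Finset.range (i + 1), 1 / (((i:ℂ) + 1) * x + m)) - Complex.log r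
        + 1 / ((i:ℂ) + 1) * (a / (2 * x)) := by
    intro i
    have hd := digammaC_add_nat (slit_succ_mul hx i) (i + 1)
    have e : ((i:ℂ) + 1) * x + (i + 1 : ℕ) = (i + 1) * (x + 1) := by push_cast; ring
    rw [e] at hd
    rw [phiC, phiC, hd, log_succ_mul hx, log_succ_mul hx1, hlog, ha]
    have := hi0 i
    have e2 : 1 / (2 * (((i:ℂ) + 1) * x)) - 1 / (2 * (((i:ℂ) + 1) * (x + 1))) =
      1 / ((i:ℂ) + 1) * (1 / (x + 1) / (2 * x)) := by
      field_simp; ring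
    rw [← e2]; ring
  have t2 : ∀ i : ℕ, a * phiC ((i + 1) * r) = a * digammaC ((i + 1) * r)
      - a * ((Real.log ((i:ℝ) + 1) : ℂ) + Complex.log r) + 1 / ((i:ℂ) + 1) * (1 / (2 * x)) := by
    intro i
    have := hi0 i
    rw [phiC, log_succ_mul hr]
    have e2 : a * (1 / (2 * (((i:ℂ) + 1) * r))) = 1 / ((i:ℂ) + 1) * (1 / (2 * x)) := by
      rw [hra]; field_simp
    rw [← e2]; ring
  have t3 : ∑ i ∈ Finset.range N, ∑ m ∈ Finset.range (i + 1), 1 / (((i:ℂ) + 1) * x + m) =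
      ∑ j ∈ Finset.range N, (a * digammaC (N - (j + 1) * a + 1) - a * digammaC ((j + 1) * r)) := by
    have h := Finset.sum_range_diag_flip N (fun j k : ℕ => 1 / (((j:ℂ) + k + 1) * x + k))
    have h1 : ∀ i : ℕ, ∑ k ∈ Finset.range (i + 1), 1 / (((k:ℂ) + (i - k : ℕ) + 1) * x + (i - k : ℕ)) =
        ∑ m ∈ Finset.range (i + 1), 1 / (((i:ℂ) + 1) * x + m) := by
      intro i
      rw [← Finset.sum_range_reflect (fun m : ℕ => 1 / (((i:ℂ) + 1) * x + m))]
      refine Finset.sum_congr rfl fun k hk => ?_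
      have hk : k ≤ i := Nat.lt_succ_iff.1 (Finset.mem_range.1 hk)
      rw [Nat.add_sub_cancel, Nat.cast_sub hk]
      congr 2; ring
    simp only [h1] at h
    rw [h]
    refine Finset.sum_congr rfl fun j hj => ?_
    have hj : j < N := Finset.mem_range.1 hj
    have hd := digammaC_add_nat (slit_succ_mul hr j) (N - j)
    have e : ((j:ℂ) + 1) * r + (N - j : ℕ) = N - (j + 1) * a + 1 := by
      have : r = 1 - a := by rw [hra, ← hax]; ring
      rw [Nat.cast_sub hj.le, this]; ring
    rw [e] at hd
    rw [hd, mul_add, add_sub_cancel_left, Finset.mul_sum]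
    refine Finset.sum_congr rfl fun k _ => ?_
    have e2 : ((j:ℂ) + k + 1) * x + k = (x + 1) * ((j + 1) * r + k) := by
      have : (x + 1) * r = x := by rw [hra, ← mul_assoc, mul_comm (x + 1), hax, one_mul]
      rw [mul_add, mul_left_comm, this]; ring
    rw [e2, ha, one_div_mul_one_div]
  rw [← Finset.sum_sub_distrib, Finset.sum_congr rfl (fun i _ => t1 i), Finset.mul_sum,
    Finset.sum_congr rfl (fun i _ => t2 i)]
  simp only [Finset.sum_add_distrib, Finset.sum_sub_distrib, Finset.sum_neg_distrib,
    ← Finset.mul_sum, ← Finset.sum_mul, t3, Finset.sum_const, Finset.card_range, nsmul_eq_mul]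
  have e5 : a / (2 * x) = 1 / (2 * x) - a / 2 := by
    rw [ha]; field_simp; ring
  rw [e5]
  linear_combination ((N:ℂ) * Complex.log r) * hax

theorem ramanujan_period_relation (x : ℂ) (hx : x ∈ Complex.slitPlane) :
    F1 x - F1 (x + 1) - (1 / (x + 1)) * F1 (x / (x + 1)) = 0 := by
  have hx1 : x + 1 ∈ Complex.slitPlane := by simpa using slit_add_nat hx 1
  have hx0 := Complex.slitPlane_ne_zero hx
  have hx10 := Complex.slitPlane_ne_zero hx1
  set a : ℂ := 1 / (x + 1) with ha
  set r : ℂ := x / (x + 1) with hr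
  have hlog : Complex.log r = Complex.log x - Complex.log (x + 1) := by
    apply log_sub_of_same_side hx hx1
    rcases le_total 0 x.im with h | h
    · left; simpa using h
    · right; simpa using h
  have hra : r = a * x := by rw [hr, ha]; ring
  have hax : a * (x + 1) = 1 := by rw [ha]; field_simp
  have ha0 : a ≠ 0 := one_div_ne_zero hx10
  have har : a + r = 1 := by rw [hra]; linear_combination hax
  have hrs : r ∈ Complex.slitPlane := by
    by_contra hcon
    rw [Complex.mem_slitPlane_iff] at hcon
    push Not at hcon
    obtain ⟨h1, h2⟩ := hcon
    have hre : r = ((r.re : ℝ) : ℂ) := by apply Complex.ext <;> simp [h2]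
    have hxr : x = ((r.re / (1 - r.re) : ℝ) : ℂ) := by
      have hne : (1 - r) ≠ 0 := by rw [← har]; simpa using ha0
      have : x = r / (1 - r) := by
        rw [eq_div_iff hne, ← har, add_sub_cancel_right, hra, mul_comm]
      rw [this]; conv_lhs => rw [hre]
      push_cast; rfl
    rw [hxr, Complex.ofReal_mem_slitPlane] at hx
    have : r.re / (1 - r.re) ≤ 0 := div_nonpos_of_nonpos_of_nonneg h1 (by linarith)
    linarith
  have hL := ((S1_tendsto hx).sub (S1_tendsto hx1)).sub ((S1_tendsto hrs).const_mul a)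
  have hR1 := sum_digamma_limit ha0 har hrs
  have hR2 := (Complex.continuous_ofReal.tendsto _).comp stirling_harmonic_limit
  have hR := ((hR2.sub hR1).add_const (x * Complex.log r / 2)).const_mul a
  have hS : S1 x - S1 (x + 1) - a * S1 r =
      a * (((Real.log (2 * Real.pi) / 2 - Real.eulerMascheroniConstant / 2 : ℝ) : ℂ) - 0
        + x * Complex.log r / 2) := by
    refine tendsto_nhds_unique hL (hR.congr' ?_)
    filter_upwards [Filter.eventually_gt_atTop 0] with N hN
    have hN' : (0:ℝ) < N := by exact_mod_cast hN
    rw [finite_identity hx hx1 hrs hra hax hlog N]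
    have l1 : Complex.log ((N:ℂ) * r) = (Real.log N : ℂ) + Complex.log r := by
      rw [← Complex.log_ofReal_mul hN' (Complex.slitPlane_ne_zero hrs)]; push_cast; rfl
    have l2 : Complex.log (N:ℂ) = (Real.log N : ℂ) := by
      rw [Complex.ofReal_log hN'.le]; push_cast; rfl
    have hHH : 1 / a * (HH r N - HH r (N * r)) =
        N * (Real.log N : ℂ) - N - x * N * Complex.log r - x * Complex.log r / 2 := by
      rw [HH, HH, l1, l2]
      have : r = 1 - a := by rw [← har]; ring
      have hxx : x = (1 - a) / a := by rw [eq_div_iff ha0]; linear_combination hax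
      rw [hxx, this]; field_simp; ring
    rw [hHH]
    simp only [Function.comp_apply]
    push_cast
    ring
  have hlp : ∀ p : ℂ, p ∈ Complex.slitPlane →
      Complex.log (2 * Real.pi / p) = (Real.log (2 * Real.pi) : ℂ) - Complex.log p := by
    intro p hp
    have h2 : ((2 * Real.pi : ℝ) : ℂ) ∈ Complex.slitPlane :=
      Complex.ofReal_mem_slitPlane.2 (by positivity)
    have := log_sub_of_same_side h2 hp (by
      rcases le_total 0 p.im with h | h
      · left; exact ⟨by rw [Complex.ofReal_im], h⟩
      · right; exact ⟨by rw [Complex.ofReal_im], h⟩)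
    rw [Complex.ofReal_log (by positivity), ← this]; push_cast; rfl
  rw [F1, F1, F1, hlp x hx, hlp _ hx1, hlp r hrs]
  push_cast at hS ⊢
  have h1 : Complex.log (x + 1) = Complex.log x - Complex.log r := by rw [hlog]; ring
  rw [h1]
  linear_combination hS + (Complex.log r / 2) * hax
end
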